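/- Colored Tverberg theorem for rainbow-unavoidable complexes: Let r = p^ν be a prime power, let d ≥ 1, k ≥ 0 and 0 < s ≤ r be integers with r(k−1) + s = (r−1)d, and set m = (2r−1)(k+1) and N = m−1. Let c : Fin m → Fin (k+1) be a coloring in which every color class has exactly 2r−1 elements, and let ⟨K_1, …, K_r⟩ be a collectively (r,s)-rainbow unavoidable family of simplicial complexes on Fin m such that each K_i is (m,k)-rainbow balanced with respect to c. Then for every continuous map f : stdSimplex ℝ (Fin m) → ℝ^d there exist pairwise disjoint finsets Δ_1, …, Δ_r of Fin m with Δ_i ∈ K_i for each i and ⋂_{i=1}^r f(Face(Δ_i)) ≠ ∅. -/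

import Mathlib

/-!
Write `r = |F|` for a finite field `F`, whose additive group acts on everything below by
shifting indices.

*The configuration space.* Take one copy of every vertex of `Fin m` for each `i : F`, and likewise
of some auxiliary points. A simplex is a set of copies in which no point of `Fin m` is used twice,
no block `i` uses a color twice, and every auxiliary point is used at most once. A point of the
realization consists of weights on `r` pairwise disjoint rainbow blocks together with weights on
auxiliary points, each of which belongs to at most one block. For classes of `2 r - 1` vertices,
this complex, a join of chessboard complexes and of discrete sets, is acyclic below its top
dimension (`acyc_matching`, `acyc_vtx`).

*The topological input.* `exists_const_point`: if the flag complex of an equivariant relation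
without edges inside an orbit is acyclic up to degree `2 e (r - 1) - 1`, then a continuous
equivariant map from its realization to `2 e` copies of the regular representation takes a value
all of whose components are constant. The proof is by chains. Acyclicity gives a chain map from
the start of the minimal resolution over `F[τ] / τ ^ p`, where `τ = ∑ ξ i (g i - 1)` for a basis
`g = ξ` of `F` over `ZMod p`, viewed both as group elements and as coefficients
(`ChainTower`, `exists_tower`). A map without constant value yields, through the partial sums of
its components over the level sets of linear functionals `F → ZMod p`, an equivariant labelling of
the realization by finitely many types (`const_of_levelSum`). The product of the Bockstein classes
of the labels, written with the carry cocycle of addition in `ZMod p`, is nonzero on the tower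
(`theta_eval`), but it vanishes on lists which are sorted by type and on which labels of equal
type agree (`theta_vanish`). A fine barycentric subdivision, followed by a subdivision that sorts
by type, consists of such lists, a contradiction (`no_labelling`).

*The test map.* It has `2 (d + 1)` components: the `d` coordinates of `f` at the normalized
blocks, the masses of the blocks, `d` sums of `r - 1` auxiliary weights, and one component that
measures how far the blocks are from being assignable to the complexes `K j`. For the last one,
call the configuration of superlevel sets at a level `t` obstructed if Hall's condition fails for
the assignment of its blocks of size `k + 1`; smaller blocks lie in every `K j`. The smallest set
of blocks with largest deficiency then singles out one block, and the component of index `i` is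
the measure of the levels `t` at which block `i` is singled out, plus `s - 1` auxiliary weights.
Superlevel sets form a chain, along which the deficiency determines the singled out block
(`obstructed_unique`), and unavoidability bounds the deficiency by `r - s` (`deficit_le`).
So at most `r - s` blocks are ever singled out, and together with `s - 1` auxiliary points at most
`r - 1` indices carry mass; a constant component therefore vanishes (`mass_eq_zero`). For the same
reason all auxiliary weights vanish at a point with constant components. There the blocks have
equal mass and equal images, and Hall's theorem assigns them to the complexes.
The equation relating `r`, `k`, `s`, `d` says exactly that the acyclicity is just sufficient.
-/

/-- `K` is an abstract simplicial complex on `Fin m`. -/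
def IsSimplicialComplex {m : ℕ} (K : Set (Finset (Fin m))) : Prop :=
  ∀ A ∈ K, ∀ B ⊆ A, B ∈ K

/-- `A` is rainbow w.r.t. the coloring `c`: `c` is injective on `A`. -/
def IsRainbow {m k : ℕ} (c : Fin m → Fin (k + 1)) (A : Finset (Fin m)) : Prop :=
  Set.InjOn c ↑A

/-- `K` is `(m,k)`-rainbow balanced w.r.t. `c`. -/
def IsRainbowBalanced {m k : ℕ} (c : Fin m → Fin (k + 1)) (K : Set (Finset (Fin m))) : Prop :=
  (∀ A : Finset (Fin m), IsRainbow c A → A.card ≤ k → A ∈ K) ∧ ∀ A ∈ K, IsRainbow c A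

/-- `K` is `(m,k)`-balanced. -/
def IsBalanced {m : ℕ} (k : ℕ) (K : Set (Finset (Fin m))) : Prop :=
  (∀ A : Finset (Fin m), A.card ≤ k → A ∈ K) ∧ ∀ A ∈ K, A.card ≤ k + 1

/-- The family `K` is collectively `(r,s)`-unavoidable. -/
def CollectivelyUnavoidable {m : ℕ} (r s : ℕ) (K : Fin r → Set (Finset (Fin m))) : Prop :=
  ∀ A : Fin r → Finset (Fin m), (∀ i j, i ≠ j → Disjoint (A i) (A j)) →
    ∃ I : Finset (Fin r), I.card = s ∧ ∀ i ∈ I, A i ∈ K i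

/-- The family `K` is collectively `(r,s)`-rainbow unavoidable w.r.t. `c`. -/
def CollectivelyRainbowUnavoidable {m k : ℕ} (c : Fin m → Fin (k + 1)) (r s : ℕ)
    (K : Fin r → Set (Finset (Fin m))) : Prop :=
  ∀ A : Fin r → Finset (Fin m), (∀ i j, i ≠ j → Disjoint (A i) (A j)) →
    (∀ i, IsRainbow c (A i)) →
    ∃ I : Finset (Fin r), I.card = s ∧ ∀ i ∈ I, A i ∈ K i

/-- The face of the standard simplex spanned by the vertex set `A`. -/
def simplexFace {m : ℕ} (A : Finset (Fin m)) : Set (stdSimplex ℝ (Fin m)) :=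
  {x | Function.support (x : Fin m → ℝ) ⊆ ↑A}

namespace RainbowTverberg
open Finsupp

/-! ### Chains of lists -/

section Chains

variable {F : Type*} [CommRing F] {V W : Type*}

/-- Prepending the vertex `v` to every list of a chain (the cone with apex `v`). -/
noncomputable def cone (v : V) : (List V →₀ F) →ₗ[F] (List V →₀ F) :=
  Finsupp.lmapDomain F F (List.cons v)

/-- The boundary of a list; the empty list sits in degree `-1`, so that `[v]` has boundary `[]`. -/
noncomputable def bdList : List V → (List V →₀ F)
  | [] => 0
  | v :: l => Finsupp.single l 1 - cone v (bdList l)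

/-- The augmented boundary operator on chains of lists (ordered, possibly degenerate simplices). -/
noncomputable def bd : (List V →₀ F) →ₗ[F] (List V →₀ F) :=
  Finsupp.linearCombination F bdList

@[simp] lemma cone_single (v : V) (l : List V) (a : F) :
    cone v (single l a) = single (v :: l) a := by
  simp [cone, Finsupp.lmapDomain_apply, Finsupp.mapDomain_single]

@[simp] lemma bd_single (l : List V) (a : F) : bd (single l a) = a • bdList l := by
  simp [bd, Finsupp.linearCombination_single]

lemma bd_cone (v : V) (x : List V →₀ F) : bd (cone v x) = x - cone v (bd x) := by
  induction x using Finsupp.induction_linear with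
  | zero => simp
  | add x y hx hy => simp only [map_add, hx, hy]; abel
  | single l a => simp [bdList, smul_sub]

lemma bd_bdList (l : List V) : bd (bdList (F := F) l) = 0 := by
  induction l with
  | nil => simp [bdList]
  | cons v l ih => simp [bdList, bd_cone, ih]

lemma bd_bd (x : List V →₀ F) : bd (bd x) = 0 := by
  induction x using Finsupp.induction_linear with
  | zero => simp
  | add x y hx hy => simp [hx, hy]
  | single l a => simp [bd_bdList]

/-- The chain map induced by a map of vertices. -/
noncomputable def push (f : V → W) : (List V →₀ F) →ₗ[F] (List W →₀ F) :=
  Finsupp.lmapDomain F F (List.map f)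

@[simp] lemma push_single (f : V → W) (l : List V) (a : F) :
    push f (single l a) = single (l.map f) a := by
  simp [push, Finsupp.lmapDomain_apply, Finsupp.mapDomain_single]

lemma push_cone (f : V → W) (v : V) (x : List V →₀ F) :
    push f (cone v x) = cone (f v) (push f x) := by
  induction x using Finsupp.induction_linear with
  | zero => simp
  | add x y hx hy => simp [hx, hy]
  | single l a => simp

lemma bdList_map (f : V → W) (l : List V) : bdList (F := F) (l.map f) = push f (bdList l) := by
  induction l with
  | nil => simp [bdList]
  | cons v l ih => simp [bdList, push_cone, ih]

lemma bd_push (f : V → W) (x : List V →₀ F) : bd (push f x) = push f (bd x) := by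
  induction x using Finsupp.induction_linear with
  | zero => simp
  | add x y hx hy => simp [hx, hy]
  | single l a => simp [bdList_map]

/-- A linear map sends chains supported in `s` to chains supported in `t` as soon as it does so
on generators. -/
lemma map_mem_supported {A : Type*} (φ : (A →₀ F) →ₗ[F] (List W →₀ F)) {s : Set A}
    {t : Set (List W)}
    (h : ∀ l ∈ s, φ (single l 1) ∈ Finsupp.supported F F t) {x : A →₀ F}
    (hx : x ∈ Finsupp.supported F F s) : φ x ∈ Finsupp.supported F F t := by
  rw [← Finsupp.sum_single x, Finsupp.sum, map_sum]
  refine Submodule.sum_mem _ fun l hl => ?_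
  have : single l (x l) = x l • single l (1 : F) := by simp
  rw [this, map_smul]
  exact Submodule.smul_mem _ _ (h l (hx hl))

lemma bdList_supported (l : List V) :
    bdList l ∈ Finsupp.supported F F
      {l' : List V | l'.length + 1 = l.length ∧ l'.Sublist l} := by
  induction l with
  | nil => simp [bdList]
  | cons v l ih =>
    refine Submodule.sub_mem _ (Finsupp.single_mem_supported _ _ (by simp)) ?_
    refine map_mem_supported _ ?_ ih
    rintro l' ⟨h1, h2⟩
    rw [cone_single]
    exact Finsupp.single_mem_supported _ _ ⟨by simp [h1], h2.cons_cons v⟩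

/-- Generalized barycentric subdivision, on lists of length at most `n`: the list `l` is
replaced by the cone, with apex `ap l`, over the subdivision of its boundary. -/
noncomputable def sdAux (ap : List V → V) : ℕ → (List V →₀ F) →ₗ[F] (List V →₀ F)
  | 0 => Finsupp.linearCombination F fun l => single l 1
  | n + 1 => Finsupp.linearCombination F fun l =>
      if l = [] then single [] 1 else cone (ap l) (sdAux ap n (bdList l))

/-- Generalized barycentric subdivision with apex function `ap`. -/
noncomputable def sd (ap : List V → V) : (List V →₀ F) →ₗ[F] (List V →₀ F) :=
  Finsupp.linearCombination F fun l => sdAux ap l.length (single l 1)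

lemma sd_supported_len (ap : List V → V) (n : ℕ) {x : List V →₀ F}
    (hx : x ∈ Finsupp.supported F F {l : List V | l.length = n}) : sd ap x = sdAux ap n x := by
  rw [← Finsupp.sum_single x, Finsupp.sum, map_sum, map_sum]
  refine Finset.sum_congr rfl fun l hl => ?_
  have : single l (x l) = x l • single l (1 : F) := by simp
  have hl' : l.length = n := hx hl
  rw [this, map_smul, map_smul]
  simp [sd, Finsupp.linearCombination_single, hl']

lemma sd_nil (ap : List V → V) (a : F) : sd ap (single [] a) = single [] a := by
  simp [sd, sdAux, Finsupp.linearCombination_single]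

lemma sd_single (ap : List V → V) {l : List V} (hl : l ≠ []) (a : F) :
    sd ap (single l a) = a • cone (ap l) (sd ap (bdList l)) := by
  obtain ⟨v, l, rfl⟩ := List.exists_cons_of_ne_nil hl
  have : bdList (F := F) (v :: l) ∈ Finsupp.supported F F {l' : List V | l'.length = l.length} := by
    refine Finsupp.supported_mono ?_ (bdList_supported (v :: l))
    rintro l' ⟨h, -⟩
    simpa using h
  rw [sd_supported_len ap _ this]
  simp [sd, sdAux, Finsupp.linearCombination_single]

lemma bd_sd_single (ap : List V → V) (n : ℕ) : ∀ l : List V, l.length = n →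
    bd (sd ap (single l (1 : F))) = sd ap (bdList l) := by
  induction n with
  | zero =>
    intro l hl
    obtain rfl := List.length_eq_zero_iff.1 hl
    simp [sd_nil, bdList]
  | succ n ih =>
    intro l hl
    have hl0 : l ≠ [] := by rintro rfl; simp at hl
    rw [sd_single ap hl0, one_smul, bd_cone]
    suffices h : bd (sd ap (bdList (F := F) l)) = 0 by simp [h]
    have key : ∀ x ∈ Finsupp.supported F F {l' : List V | l'.length = n},
        bd (sd ap x) = sd ap (bd x) := by
      intro x hx
      rw [← Finsupp.sum_single x, Finsupp.sum]
      simp only [map_sum]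
      refine Finset.sum_congr rfl fun l' hl' => ?_
      have : single l' (x l') = x l' • single l' (1 : F) := by simp
      rw [this]
      simp only [map_smul]
      rw [ih l' (hx hl')]
      simp
    rw [key, bd_bdList, map_zero]
    refine Finsupp.supported_mono ?_ (bdList_supported l)
    rintro l' ⟨h, -⟩
    change l'.length = n
    omega

lemma bd_sd (ap : List V → V) (x : List V →₀ F) : bd (sd ap x) = sd ap (bd x) := by
  induction x using Finsupp.induction_linear with
  | zero => simp
  | add x y hx hy => simp [hx, hy]
  | single l a =>
    have : single l a = a • single l (1 : F) := by simp
    rw [this]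
    simp only [map_smul, bd_sd_single ap _ l rfl]
    simp

lemma push_sd (ap : List V → V) (f : V → V) (hf : ∀ l ≠ [], ap (l.map f) = f (ap l))
    (x : List V →₀ F) : push f (sd ap x) = sd ap (push f x) := by
  have key : ∀ n, ∀ x ∈ Finsupp.supported F F {l' : List V | l'.length = n},
      push f (sd ap x) = sd ap (push f x) := by
    intro n
    induction n with
    | zero =>
      intro x hx
      rw [← Finsupp.sum_single x, Finsupp.sum]
      simp only [map_sum]
      refine Finset.sum_congr rfl fun l' hl' => ?_
      obtain rfl := List.length_eq_zero_iff.1 (hx hl')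
      simp [sd_nil]
    | succ n ih =>
      intro x hx
      rw [← Finsupp.sum_single x, Finsupp.sum]
      simp only [map_sum]
      refine Finset.sum_congr rfl fun l hl => ?_
      have hl1 : l.length = n + 1 := hx hl
      have hl0 : l ≠ [] := by rintro rfl; simp at hl1
      have hl2 : l.map f ≠ [] := by simpa using hl0
      rw [push_single, sd_single ap hl0, sd_single ap hl2, map_smul, push_cone, hf l hl0,
        bdList_map, ih]
      refine Finsupp.supported_mono ?_ (bdList_supported l)
      rintro l' ⟨h, -⟩
      change l'.length = n
      omega
  induction x using Finsupp.induction_linear with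
  | zero => simp
  | add x y hx hy => simp [hx, hy]
  | single l a => exact key l.length _ (Finsupp.single_mem_supported _ _ rfl)

/-- Induction principle for the lists occurring in a subdivision: `Q l l'` is to hold for every
list `l'` occurring in the subdivision of `l`. -/
lemma sd_supported (ap : List V → V) (Q : List V → List V → Prop) (h0 : Q [] [])
    (h1 : ∀ l l₀ l' : List V, l₀.length + 1 = l.length → l₀.Sublist l → Q l₀ l' →
      Q l (ap l :: l')) (l : List V) :
    sd ap (single l (1 : F)) ∈ Finsupp.supported F F {l' | Q l l'} := by
  generalize hn : l.length = n
  induction n generalizing l with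
  | zero =>
    obtain rfl := List.length_eq_zero_iff.1 hn
    rw [sd_nil]
    exact Finsupp.single_mem_supported _ _ h0
  | succ n ih =>
    have hl0 : l ≠ [] := by rintro rfl; simp at hn
    rw [sd_single ap hl0, one_smul]
    refine map_mem_supported (s := {l' | ∃ l₀ : List V, l₀.length + 1 = l.length ∧
      l₀.Sublist l ∧ Q l₀ l'}) _ ?_ ?_
    · rintro l' ⟨l₀, h, h', h''⟩
      rw [cone_single]
      exact Finsupp.single_mem_supported _ _ (h1 _ _ _ h h' h'')
    · refine map_mem_supported _ ?_ (bdList_supported l)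
      rintro l₀ ⟨h, h'⟩
      refine Finsupp.supported_mono ?_ (ih l₀ (by omega))
      intro l' hl'
      exact ⟨l₀, h, h', hl'⟩

end Chains
end RainbowTverberg

namespace RainbowTverberg
open Finsupp

/-! ### Acyclicity of matching complexes -/

section Acyclic

variable (F : Type*) [Field F] {V : Type*}

/-- The lists of length `k` whose entries span a simplex of the flag complex on the vertex set `U`
with edge relation `R`. -/
def Flag (R : V → V → Prop) (U : Set V) (k : ℕ) : Set (List V) :=
  {l | l.length = k ∧ (∀ a ∈ l, a ∈ U) ∧ ∀ a ∈ l, ∀ b ∈ l, R a b}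

/-- Every cycle of lists of length `k` in the flag complex on `U` bounds, that is, the reduced
homology in degree `k - 1` vanishes. -/
def Acyc (R : V → V → Prop) (U : Set V) (k : ℕ) : Prop :=
  ∀ z ∈ Finsupp.supported F F (Flag R U k), bd z = 0 →
    ∃ w ∈ Finsupp.supported F F (Flag R U (k + 1)), bd w = z

variable {F} {R : V → V → Prop}

lemma Flag.mono {U U' : Set V} (h : U ⊆ U') (k : ℕ) : Flag R U k ⊆ Flag R U' k :=
  fun _ hl => ⟨hl.1, fun a ha => h (hl.2.1 a ha), hl.2.2⟩

lemma bdList_flag {U : Set V} {k : ℕ} {l : List V} (hl : l ∈ Flag R U (k + 1)) :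
    bdList l ∈ Finsupp.supported F F (Flag R U k) := by
  refine Finsupp.supported_mono ?_ (bdList_supported l)
  rintro l' ⟨h1, h2⟩
  have := hl.1
  exact ⟨by omega, fun a ha => hl.2.1 a (h2.subset ha),
    fun a ha b hb => hl.2.2 a (h2.subset ha) b (h2.subset hb)⟩

lemma bd_flag {U : Set V} {k : ℕ} {x : List V →₀ F}
    (hx : x ∈ Finsupp.supported F F (Flag R U (k + 1))) :
    bd x ∈ Finsupp.supported F F (Flag R U k) := by
  refine map_mem_supported _ ?_ hx
  intro l hl
  simpa using bdList_flag hl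

lemma acyc_of_cone (hsymm : ∀ a b, R a b → R b a) {U : Set V} {v : V} (hv : v ∈ U)
    (hR : ∀ u ∈ U, R v u) (k : ℕ) : Acyc F R U k := by
  intro z hz hbz
  refine ⟨cone v z, ?_, by simp [bd_cone, hbz]⟩
  refine map_mem_supported _ ?_ hz
  rintro l ⟨h1, h2, h3⟩
  rw [cone_single]
  refine Finsupp.single_mem_supported _ _ ⟨by simp [h1], ?_, ?_⟩
  · intro a ha
    rcases List.mem_cons.1 ha with rfl | ha
    exacts [hv, h2 a ha]
  · intro a ha b hb
    rcases List.mem_cons.1 ha with ha' | ha' <;> rcases List.mem_cons.1 hb with hb' | hb'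
    · rw [ha', hb']; exact hR _ hv
    · rw [ha']; exact hR _ (h2 b hb')
    · rw [hb']; exact hsymm _ _ (hR _ (h2 a ha'))
    · exact h3 a ha' b hb'

/-- Mayer-Vietoris for the decomposition of a flag complex into the deletion and the star of a
vertex `v`, which intersect in the link of `v`. -/
lemma acyc_insert (hrefl : ∀ a, R a a) (hsymm : ∀ a b, R a b → R b a) {U : Set V} {v : V} {k : ℕ}
    (hdel : Acyc F R U k)
    (hlink : ∀ k', k = k' + 1 → Acyc F R {u ∈ U | R v u} k') :
    Acyc F R (insert v U) k := by
  classical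
  intro z hz hbz
  by_cases hvU : v ∈ U
  · rw [Set.insert_eq_of_mem hvU] at hz ⊢
    exact hdel z hz hbz
  rcases k with _ | k
  · have : z ∈ Finsupp.supported F F (Flag R U 0) := by
      refine Finsupp.supported_mono ?_ hz
      rintro l ⟨h1, -, -⟩
      obtain rfl := List.length_eq_zero_iff.1 h1
      exact ⟨rfl, by simp, by simp⟩
    obtain ⟨w, hw, hw'⟩ := hdel z this hbz
    exact ⟨w, Finsupp.supported_mono (Flag.mono (Set.subset_insert _ _) _) hw, hw'⟩
  set St : Set V := {u ∈ insert v U | R v u} with hSt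
  set Lk : Set V := {u ∈ U | R v u} with hLk
  set zS := z.filter (fun l => v ∈ l) with hzS
  set zD := z.filter (fun l => v ∉ l) with hzD
  have hsum : zS + zD = z := Finsupp.filter_add_filter_not z _
  have hS : zS ∈ Finsupp.supported F F (Flag R St (k + 1)) := by
    intro l hl
    rw [hzS, Finset.mem_coe, Finsupp.support_filter, Finset.mem_filter] at hl
    obtain ⟨h1, h2, h3⟩ := hz hl.1
    exact ⟨h1, fun a ha => ⟨h2 a ha, h3 _ hl.2 _ ha⟩, h3⟩
  have hD : zD ∈ Finsupp.supported F F (Flag R U (k + 1)) := by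
    intro l hl
    rw [hzD, Finset.mem_coe, Finsupp.support_filter, Finset.mem_filter] at hl
    obtain ⟨h1, h2, h3⟩ := hz hl.1
    refine ⟨h1, fun a ha => ?_, h3⟩
    rcases Set.mem_insert_iff.1 (h2 a ha) with rfl | h
    exacts [absurd ha hl.2, h]
  have hbd : bd zD = - bd zS := by
    have := congrArg bd hsum
    rw [map_add, hbz] at this
    exact eq_neg_of_add_eq_zero_right this
  have hu : bd zD ∈ Finsupp.supported F F (Flag R Lk k) := by
    have h1 := bd_flag hD
    have h2 : bd zD ∈ Finsupp.supported F F (Flag R St k) := by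
      rw [hbd]; exact Submodule.neg_mem _ (bd_flag hS)
    intro l hl
    exact ⟨(h1 hl).1, fun a ha => ⟨(h1 hl).2.1 a ha, ((h2 hl).2.1 a ha).2⟩, (h1 hl).2.2⟩
  obtain ⟨t, ht, htb⟩ := hlink k rfl _ hu (bd_bd _)
  obtain ⟨w, hw, hwb⟩ := hdel (zD - t)
    (Submodule.sub_mem _ hD (Finsupp.supported_mono (Flag.mono (fun u hu => hu.1) _) ht))
    (by rw [map_sub, htb, sub_self])
  have hLS : Lk ⊆ St := fun u hu => ⟨Set.mem_insert_of_mem _ hu.1, hu.2⟩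
  obtain ⟨w', hw', hwb'⟩ := acyc_of_cone (F := F) hsymm (U := St) (v := v)
    ⟨Set.mem_insert _ _, hrefl v⟩ (fun u hu => hu.2) (k + 1) (zS + t)
    (Submodule.add_mem _ hS (Finsupp.supported_mono (Flag.mono hLS _) ht))
    (by rw [map_add, htb, hbd, add_neg_cancel])
  refine ⟨w + w', Submodule.add_mem _
    (Finsupp.supported_mono (Flag.mono (Set.subset_insert _ _) _) hw)
    (Finsupp.supported_mono (Flag.mono (fun u hu => hu.1) _) hw'), ?_⟩
  rw [map_add, hwb, hwb', ← hsum]; abel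

lemma acyc_union (hrefl : ∀ a, R a a) (hsymm : ∀ a b, R a b → R b a) [DecidableEq V]
    {U₀ : Set V} {k : ℕ} (B : Finset V) (h0 : Acyc F R U₀ k)
    (hlink : ∀ v ∈ B, ∀ B' ⊆ B, v ∉ B' → ∀ k', k = k' + 1 →
      Acyc F R {u ∈ U₀ ∪ ↑B' | R v u} k') :
    Acyc F R (U₀ ∪ ↑B) k := by
  induction B using Finset.induction_on with
  | empty => simpa using h0
  | insert v B hv ih =>
    rw [Finset.coe_insert, Set.union_insert]
    refine acyc_insert hrefl hsymm (ih fun u hu B' hB' huB' => ?_) ?_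
    · exact hlink u (Finset.mem_insert_of_mem hu) B' (hB'.trans (Finset.subset_insert _ _)) huB'
    · exact hlink v (Finset.mem_insert_self _ _) B (Finset.subset_insert _ _) hv

/-- Acyclicity of chessboard-like complexes. A simplex is a set of vertices with distinct rows
and distinct columns; columns are shared only between rows of the same class, and every row has
at least `2 c - 1` vertices, where `c` is the number of rows of its class. -/
theorem acyc_matching [DecidableEq V] {P Q S : Type*} [DecidableEq P] [DecidableEq Q]
    [DecidableEq S] (row : V → P) (col : V → Q) (cls : P → S)
    (hR : ∀ u v, R u v ↔ u = v ∨ (row u ≠ row v ∧ col u ≠ col v))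
    (hcol : ∀ u v, col u = col v → cls (row u) = cls (row v))
    (hinj : ∀ u v, row u = row v → col u = col v → u = v)
    (n : ℕ) : ∀ (T : Finset P) (U : Finset V), T.card = n → (∀ u ∈ U, row u ∈ T) →
    (∀ ρ ∈ T, 2 * (T.filter fun ρ' => cls ρ' = cls ρ).card ≤
      (U.filter fun u => row u = ρ).card + 1) →
    ∀ k < n, Acyc F R ↑U k := by
  have hrefl : ∀ a, R a a := fun a => (hR a a).2 (Or.inl rfl)
  have hsymm : ∀ a b, R a b → R b a := by
    intro a b h
    rw [hR] at h ⊢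
    exact h.imp Eq.symm fun h => ⟨h.1.symm, h.2.symm⟩
  induction n with
  | zero => intro T U _ _ _ k hk; omega
  | succ n ih =>
    intro T U hT hU hcount k hk
    obtain ⟨ρ₀, hρ₀⟩ : T.Nonempty := Finset.card_pos.1 (by omega)
    have hself : ∀ ρ ∈ T, 1 ≤ (T.filter fun ρ' => cls ρ' = cls ρ).card := fun ρ hρ =>
      Finset.card_pos.2 ⟨ρ, by simp [hρ]⟩
    obtain ⟨v₀, hv₀⟩ : (U.filter fun u => row u = ρ₀).Nonempty := by
      have h1 := hcount ρ₀ hρ₀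
      have h2 := hself ρ₀ hρ₀
      exact Finset.card_pos.1 (by omega)
    rw [Finset.mem_filter] at hv₀
    -- a link in which each row of the class of `ρ₁` has lost at most two vertices
    have step : ∀ ρ₁ ∈ T, ∀ U' : Finset V, (∀ u ∈ U', row u ∈ T ∧ row u ≠ ρ₁) →
        (∃ q₁ q₂ : Q, (∀ u ∈ U, row u ≠ ρ₁ → col u ≠ q₁ → col u ≠ q₂ → u ∈ U') ∧
          ∀ u, (col u = q₁ ∨ col u = q₂) → cls (row u) = cls ρ₁) →
        ∀ k' < n, Acyc F R ↑U' k' := by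
      intro ρ₁ hρ₁ U' hU' ⟨q₁, q₂, hq, hq'⟩
      refine ih (T.erase ρ₁) U' (by rw [Finset.card_erase_of_mem hρ₁]; omega) ?_ ?_
      · intro u hu
        exact Finset.mem_erase.2 ⟨(hU' u hu).2, (hU' u hu).1⟩
      · intro ρ hρ
        obtain ⟨hne, hρT⟩ := Finset.mem_erase.1 hρ
        have hc := hcount ρ hρT
        by_cases hcl : cls ρ = cls ρ₁
        · have e1 : ((T.erase ρ₁).filter fun ρ' => cls ρ' = cls ρ).card + 1 =
              (T.filter fun ρ' => cls ρ' = cls ρ).card := by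
            rw [Finset.filter_erase, Finset.card_erase_add_one]
            simp [hρ₁, hcl]
          have e2 : (U.filter fun u => row u = ρ) ⊆ (U'.filter fun u => row u = ρ) ∪
              ((U.filter fun u => row u = ρ ∧ col u = q₁) ∪
              (U.filter fun u => row u = ρ ∧ col u = q₂)) := by
            intro u hu
            rw [Finset.mem_filter] at hu
            simp only [Finset.mem_union, Finset.mem_filter]
            by_cases h1 : col u = q₁
            · exact Or.inr (Or.inl ⟨hu.1, hu.2, h1⟩)
            by_cases h2 : col u = q₂
            · exact Or.inr (Or.inr ⟨hu.1, hu.2, h2⟩)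
            · exact Or.inl ⟨hq u hu.1 (by rw [hu.2]; exact hne) h1 h2, hu.2⟩
          have one : ∀ q : Q, (U.filter fun u => row u = ρ ∧ col u = q).card ≤ 1 := by
            intro q
            rw [Finset.card_le_one]
            intro a ha b hb
            simp only [Finset.mem_filter] at ha hb
            exact hinj a b (ha.2.1.trans hb.2.1.symm) (ha.2.2.trans hb.2.2.symm)
          have e3 := (Finset.card_le_card e2).trans (Finset.card_union_le _ _)
          have e4 := Finset.card_union_le (U.filter fun u => row u = ρ ∧ col u = q₁)
            (U.filter fun u => row u = ρ ∧ col u = q₂)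
          have := one q₁
          have := one q₂
          omega
        · have e1 : ((T.erase ρ₁).filter fun ρ' => cls ρ' = cls ρ).card ≤
              (T.filter fun ρ' => cls ρ' = cls ρ).card :=
            Finset.card_le_card (Finset.filter_subset_filter _ (Finset.erase_subset _ _))
          have e2 : (U.filter fun u => row u = ρ).card ≤ (U'.filter fun u => row u = ρ).card := by
            refine Finset.card_le_card fun u hu => ?_
            rw [Finset.mem_filter] at hu ⊢
            refine ⟨hq u hu.1 (by rw [hu.2]; exact hne) ?_ ?_, hu.2⟩
            · intro h; exact hcl (by rw [← hu.2]; exact hq' u (Or.inl h))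
            · intro h; exact hcl (by rw [← hu.2]; exact hq' u (Or.inr h))
          omega
    set U₀ : Finset V := U.filter fun u => u = v₀ ∨ (row u ≠ ρ₀ ∧ col u ≠ col v₀) with hU₀
    set B₁ : Finset V := U.filter fun u => row u = ρ₀ ∧ u ≠ v₀ with hB₁
    set B₂ : Finset V := U.filter fun u => row u ≠ ρ₀ ∧ col u = col v₀ with hB₂
    have a0 : Acyc F R ↑U₀ k := by
      refine acyc_of_cone hsymm (v := v₀) (by simp [hU₀, hv₀.1]) ?_ k
      intro u hu
      rw [hU₀, Finset.mem_coe, Finset.mem_filter] at hu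
      rw [hR]
      rcases hu.2 with h | h
      · exact Or.inl h.symm
      · exact Or.inr ⟨by rw [hv₀.2]; exact h.1.symm, h.2.symm⟩
    have a1 : Acyc F R (↑U₀ ∪ ↑B₁) k := by
      refine acyc_union hrefl hsymm B₁ a0 ?_
      intro v hv B' hB' hvB' k' hk'
      rw [hB₁, Finset.mem_filter] at hv
      have : {u ∈ (↑U₀ ∪ ↑B' : Set V) | R v u} =
          ↑(U.filter fun u => row u ≠ ρ₀ ∧ col u ≠ col v₀ ∧ col u ≠ col v) := by
        ext u
        simp only [Set.mem_ofPred_eq, Set.mem_union, Finset.mem_coe, Finset.mem_filter, hU₀]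
        constructor
        · rintro ⟨h | h, hr⟩
          · rw [hR] at hr
            rcases hr with rfl | hr
            · rcases h.2 with h' | h'
              · exact absurd h' hv.2.2
              · exact absurd hv.2.1 h'.1
            · rcases h.2 with rfl | h'
              · exact absurd (hv.2.1.trans hv₀.2.symm) hr.1
              · exact ⟨h.1, h'.1, h'.2, hr.2.symm⟩
          · have hu := hB' h
            rw [hB₁, Finset.mem_filter] at hu
            rw [hR] at hr
            rcases hr with rfl | hr
            · exact absurd h hvB'
            · exact absurd (hv.2.1.trans hu.2.1.symm) hr.1
        · rintro ⟨h1, h2, h3, h4⟩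
          exact ⟨Or.inl ⟨h1, Or.inr ⟨h2, h3⟩⟩, (hR _ _).2 (Or.inr
            ⟨by rw [hv.2.1]; exact h2.symm, h4.symm⟩)⟩
      rw [this]
      refine step ρ₀ hρ₀ _ ?_ ⟨col v₀, col v, ?_, ?_⟩ k' (by omega)
      · intro u hu
        rw [Finset.mem_filter] at hu
        exact ⟨hU u hu.1, hu.2.1⟩
      · intro u hu h1 h2 h3
        simp [hu, h1, h2, h3]
      · rintro u (h | h)
        · rw [hcol _ _ h, hv₀.2]
        · rw [hcol _ _ h, hv.2.1]
    have a2 : Acyc F R (↑(U₀ ∪ B₁) ∪ ↑B₂) k := by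
      refine acyc_union hrefl hsymm B₂ (by rwa [Finset.coe_union]) ?_
      intro v hv B' hB' hvB' k' hk'
      rw [hB₂, Finset.mem_filter] at hv
      have : {u ∈ (↑(U₀ ∪ B₁) ∪ ↑B' : Set V) | R v u} =
          ↑(U.filter fun u => row u ≠ row v ∧ col u ≠ col v₀) := by
        ext u
        simp only [Set.mem_ofPred_eq, Set.mem_union, Finset.mem_coe, Finset.mem_filter, hU₀, hB₁,
          Finset.mem_union]
        constructor
        · rintro ⟨h | h, hr⟩
          · rw [hR] at hr
            have huU : u ∈ U := by rcases h with h | h <;> exact h.1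
            rcases hr with rfl | hr
            · rcases h with h | h
              · rcases h.2 with h' | h'
                · exact absurd (by rw [h', hv₀.2]) hv.2.1
                · exact absurd hv.2.2 h'.2
              · exact absurd h.2.1 hv.2.1
            · exact ⟨huU, hr.1.symm, by rw [← hv.2.2]; exact hr.2.symm⟩
          · have hu := hB' h
            rw [hB₂, Finset.mem_filter] at hu
            rw [hR] at hr
            rcases hr with rfl | hr
            · exact absurd h hvB'
            · exact absurd (hv.2.2.trans hu.2.2.symm) hr.2
        · rintro ⟨h1, h2, h3⟩
          refine ⟨Or.inl ?_, (hR _ _).2 (Or.inr ⟨h2.symm, by rw [hv.2.2]; exact h3.symm⟩)⟩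
          by_cases hr : row u = ρ₀
          · exact Or.inr ⟨h1, hr, by rintro rfl; exact h3 rfl⟩
          · exact Or.inl ⟨h1, Or.inr ⟨hr, h3⟩⟩
      rw [this]
      refine step (row v) (hU v hv.1) _ ?_ ⟨col v₀, col v₀, ?_, ?_⟩ k' (by omega)
      · intro u hu
        rw [Finset.mem_filter] at hu
        exact ⟨hU u hu.1, hu.2.1⟩
      · intro u hu h1 h2 h3
        simp [hu, h1, h2]
      · intro u h
        rw [or_self] at h
        exact hcol _ _ (h.trans hv.2.2.symm)
    have hUU : (↑U : Set V) = ↑(U₀ ∪ B₁) ∪ ↑B₂ := by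
      ext u
      simp only [Set.mem_union, Finset.mem_coe, Finset.mem_filter, hU₀, hB₁, hB₂,
          Finset.mem_union]
      tauto
    rw [hUU]
    exact a2

end Acyclic
end RainbowTverberg

namespace RainbowTverberg
open Finsupp

/-! ### Carries -/

section Carry

variable {p : ℕ} [hp : Fact p.Prime]

/-- The carry of an addition in `ZMod p`. -/
def carry (a b : ZMod p) : ℕ := (a.val + b.val) / p

lemma carry_spec (a b : ZMod p) : p * carry a b + (a + b).val = a.val + b.val := by
  rw [carry, ZMod.val_add]
  exact Nat.div_add_mod _ _

/-- The carry is a 2-cocycle. -/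
lemma carry_cocycle (a b c : ZMod p) :
    carry a b + carry (a + b) c = carry b c + carry a (b + c) := by
  have h1 := carry_spec a b
  have h2 := carry_spec (a + b) c
  have h3 := carry_spec b c
  have h4 := carry_spec a (b + c)
  rw [add_assoc] at h2
  refine Nat.eq_of_mul_eq_mul_left hp.out.pos ?_
  rw [mul_add, mul_add]
  omega

lemma carry_comm (a b : ZMod p) : carry a b = carry b a := by
  rw [carry, carry, add_comm]

lemma carry_zero_left (a : ZMod p) : carry 0 a = 0 := by
  simp [carry, Nat.div_eq_of_lt (ZMod.val_lt a)]

lemma sum_carry (h : ZMod p) : ∑ c : ZMod p, carry c h = h.val := by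
  refine Nat.eq_of_mul_eq_mul_left hp.out.pos ?_
  have h1 : ∑ c : ZMod p, (p * carry c h + (c + h).val) = ∑ c : ZMod p, (c.val + h.val) :=
    Finset.sum_congr rfl fun c _ => carry_spec c h
  rw [Finset.sum_add_distrib, Finset.sum_add_distrib, ← Finset.mul_sum,
    Fintype.sum_equiv (Equiv.addRight h) (fun c => (c + h).val) (fun c => c.val)
      (fun c => rfl)] at h1
  simp only [Finset.sum_const, Finset.card_univ, ZMod.card, smul_eq_mul] at h1
  omega

end Carry

/-! ### Difference operators on functions on `ZMod p` -/

section Differences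

variable {p : ℕ} [hp : Fact p.Prime] {F : Type*} [Field F] [CharP F p]
  {ι : Type*} [Fintype ι]

/-- The shift operator on functions on `ZMod p`. -/
def shift (F : Type*) [Field F] (p : ℕ) : Module.End F (ZMod p → F) where
  toFun α c := α (c + 1)
  map_add' _ _ := rfl
  map_smul' _ _ := rfl

lemma shift_pow (n : ℕ) (α : ZMod p → F) (c : ZMod p) : (shift F p ^ n) α c = α (c + n) := by
  induction n generalizing c with
  | zero => simp
  | succ n ih =>
    rw [pow_succ', Module.End.mul_apply]
    change (shift F p ^ n) α (c + 1) = _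
    rw [ih]
    push_cast
    congr 1
    ring

/-- The weighted difference operator `∑ ξ i (T ^ h i - 1)`, where `T` is the shift. -/
def diff (ξ : ι → F) (h : ι → ZMod p) : Module.End F (ZMod p → F) where
  toFun α c := ∑ i, ξ i * (α (c + h i) - α c)
  map_add' x y := by
    funext c
    simp only [Pi.add_apply, ← Finset.sum_add_distrib]
    exact Finset.sum_congr rfl fun i _ => by ring
  map_smul' a x := by
    funext c
    simp only [Pi.smul_apply, smul_eq_mul, Finset.mul_sum, RingHom.id_apply]
    exact Finset.sum_congr rfl fun i _ => by ring

open Polynomial in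
lemma sub_one_pow_eq : ((X : F[X]) - 1) ^ (p - 1) = ∑ i ∈ Finset.range p, X ^ i := by
  have h0 : (X : F[X]) - 1 ≠ 0 := X_sub_C_ne_zero (1 : F)
  refine mul_right_cancel₀ h0 ?_
  rw [geom_sum_mul, ← pow_succ, Nat.sub_add_cancel hp.out.one_le, sub_pow_char, one_pow]

open Polynomial in
/-- In characteristic `p`, the `(p-1)`-st power of a difference operator is a multiple of the
summation over `ZMod p`. -/
lemma diff_pow (ξ : ι → F) (h : ι → ZMod p) (α : ZMod p → F) (c : ZMod p) :
    (diff ξ h ^ (p - 1)) α c = (∑ i, ξ i * ((h i).val : F)) ^ (p - 1) * ∑ c, α c := by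
  set Q : F[X] := ∑ i, ξ i • ∑ j ∈ Finset.range (h i).val, X ^ j with hQ
  have hD : diff ξ h = aeval (shift F p) ((X - 1) * Q) := by
    have : (X - 1) * Q = ∑ i, ξ i • (X ^ (h i).val - 1) := by
      rw [hQ, Finset.mul_sum]
      refine Finset.sum_congr rfl fun i _ => ?_
      rw [mul_smul_comm, mul_comm, geom_sum_mul]
    rw [this]
    refine LinearMap.ext fun α => ?_
    funext c
    simp only [map_sum, map_smul, map_sub, map_pow, aeval_X, map_one, LinearMap.sum_apply,
      LinearMap.smul_apply, LinearMap.sub_apply, Finset.sum_apply, Pi.smul_apply, Pi.sub_apply,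
      shift_pow, smul_eq_mul, Module.End.one_apply, ZMod.natCast_val, ZMod.cast_id', id]
    rfl
  have hsum : aeval (shift F p) (∑ i ∈ Finset.range p, (X : F[X]) ^ i) α =
      (∑ c, α c) • fun _ => (1 : F) := by
    funext c
    simp only [map_sum, map_pow, aeval_X, LinearMap.sum_apply, Finset.sum_apply, shift_pow,
      Pi.smul_apply, smul_eq_mul, mul_one]
    have e1 : ∑ x ∈ Finset.range p, α (c + x) = ∑ x : ZMod p, α (c + x) := by
      refine Finset.sum_bij' (fun x _ => (x : ZMod p)) (fun x _ => x.val) ?_ ?_ ?_ ?_ ?_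
      · simp
      · intro x _; simpa using ZMod.val_lt x
      · intro x hx; exact ZMod.val_cast_of_lt (Finset.mem_range.1 hx)
      · simp
      · simp
    rw [e1]
    exact Fintype.sum_equiv (Equiv.addLeft c) _ _ fun x => rfl
  have hone : aeval (shift F p) Q (fun _ => (1 : F)) =
      (∑ i, ξ i * ((h i).val : F)) • fun _ => (1 : F) := by
    funext c
    simp only [hQ, map_sum, map_smul, map_pow, aeval_X, LinearMap.sum_apply, LinearMap.smul_apply,
      Finset.sum_apply, Pi.smul_apply, shift_pow, smul_eq_mul, mul_one, Finset.sum_const,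
      Finset.card_range, nsmul_eq_mul]
  have hpow : ∀ n, (aeval (shift F p) Q ^ n) (fun _ => (1 : F)) =
      (∑ i, ξ i * ((h i).val : F)) ^ n • fun _ => (1 : F) := by
    intro n
    induction n with
    | zero => simp
    | succ n ih => rw [pow_succ, Module.End.mul_apply, hone, map_smul, ih, smul_smul, pow_succ']
  rw [hD, ← map_pow, mul_comm (X - 1) Q, mul_pow, sub_one_pow_eq, map_mul, Module.End.mul_apply,
    hsum, map_smul, map_pow, hpow]
  simp [mul_comm]

/-- The combination of carries that appears when the carry cocycle is averaged with the weights
`ξ`. Its iterated difference is a nonzero constant in the cases of interest. -/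
def betaP (ξ : ι → F) (h : ι → ZMod p) : ZMod p → F := fun c => ∑ i, ξ i * (carry c (h i) : F)

lemma diff_pow_betaP (ξ : ι → F) (h : ι → ZMod p) (c : ZMod p) :
    (diff ξ h ^ (p - 1)) (betaP ξ h) c = (∑ i, ξ i * ((h i).val : F)) ^ p := by
  rw [diff_pow]
  have : ∑ c, betaP ξ h c = ∑ i, ξ i * ((h i).val : F) := by
    simp only [betaP]
    rw [Finset.sum_comm]
    refine Finset.sum_congr rfl fun i _ => ?_
    rw [← Finset.mul_sum, ← sum_carry (h i), Nat.cast_sum]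
  rw [this, ← pow_succ, Nat.sub_add_cancel hp.out.one_le]

end Differences

/-! ### The tower of cocycles -/

section Tower

variable {p : ℕ} [hp : Fact p.Prime] {F : Type*} [Field F] [CharP F p]
  {ι : Type*} [Fintype ι] {G : Type*} [AddCommGroup G] {V W : Type*} [AddAction G V]
  [AddAction G W]

/-- The operator `∑ ξ i (g i - 1)` of the group algebra, acting on chains. In characteristic `p`,
its `p`-th power is zero if all `g i` have order dividing `p`. -/
noncomputable def tau (ξ : ι → F) (g : ι → G) : Module.End F (List V →₀ F) :=
  ∑ i, ξ i • (push (g i +ᵥ ·) - 1)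

lemma tau_apply (ξ : ι → F) (g : ι → G) (x : List V →₀ F) :
    tau ξ g x = ∑ i, ξ i • (push (g i +ᵥ ·) x - x) := by
  simp [tau]

lemma push_vadd_zero (x : List V →₀ F) : push ((0 : G) +ᵥ ·) x = x := by
  induction x using Finsupp.induction_linear with
  | zero => simp
  | add x y hx hy => rw [map_add, hx, hy]
  | single l a => simp

lemma push_vadd_add (g h : G) (x : List V →₀ F) :
    push ((g + h) +ᵥ ·) x = push (g +ᵥ ·) (push (h +ᵥ ·) x) := by
  induction x using Finsupp.induction_linear with
  | zero => simp
  | add x y hx hy => simp only [map_add, hx, hy]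
  | single l a =>
    simp only [push_single, List.map_map]
    congr 2
    funext v
    exact add_vadd g h v

/-- The action of the group algebra on chains. -/
noncomputable def actHom (F : Type*) [Field F] (G : Type*) [AddCommGroup G] (V : Type*)
    [AddAction G V] : Multiplicative G →* Module.End F (List V →₀ F) where
  toFun g := push (g.toAdd +ᵥ ·)
  map_one' := LinearMap.ext fun x => push_vadd_zero (G := G) x
  map_mul' g h := LinearMap.ext fun x => push_vadd_add g.toAdd h.toAdd x

lemma tau_pow (ξ : ι → F) {g : ι → G} (hg : ∀ i, p • g i = 0) :
    (tau ξ g : Module.End F (List V →₀ F)) ^ p = 0 := by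
  let Φ := AddMonoidAlgebra.lift F (Module.End F (List V →₀ F)) G (actHom F G V)
  let t : AddMonoidAlgebra F G := ∑ i, ξ i • (AddMonoidAlgebra.single (g i) 1 - 1)
  have ht : tau ξ g = Φ t := by
    simp only [tau, t, Φ, map_sum, map_smul, map_sub, map_one, AddMonoidAlgebra.lift_single,
      one_smul]
    rfl
  have : CharP (AddMonoidAlgebra F G) p :=
    charP_of_injective_algebraMap (FaithfulSMul.algebraMap_injective F _) p
  rw [ht, ← map_pow]
  have : t ^ p = 0 := by
    simp only [t]
    rw [sum_pow_char]
    refine Finset.sum_eq_zero fun i _ => ?_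
    rw [smul_pow, sub_pow_char, one_pow, AddMonoidAlgebra.single_pow, one_pow, hg,
      ← AddMonoidAlgebra.one_def, sub_self, smul_zero]
  rw [this, map_zero]

lemma push_comm {f : V → W} {g : G} (hf : ∀ v, f (g +ᵥ v) = g +ᵥ f v) (x : List V →₀ F) :
    push f (push (g +ᵥ ·) x) = push (g +ᵥ ·) (push f x) := by
  induction x using Finsupp.induction_linear with
  | zero => simp
  | add x y hx hy => simp only [map_add, hx, hy]
  | single l a =>
    simp only [push_single, List.map_map]
    congr 2
    funext v
    exact hf v

lemma tau_push (ξ : ι → F) (g : ι → G) {f : V → W} (hf : ∀ (g : G) v, f (g +ᵥ v) = g +ᵥ f v)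
    (x : List V →₀ F) : push f (tau ξ g x) = tau ξ g (push f x) := by
  simp only [tau_apply, map_sum, map_smul, map_sub]
  exact Finset.sum_congr rfl fun i _ => by rw [push_comm (hf _)]

lemma tau_bd (ξ : ι → F) (g : ι → G) (x : List V →₀ F) :
    bd (tau ξ g x) = tau ξ g (bd x) := by
  simp only [tau_apply, map_sum, map_smul, map_sub]
  exact Finset.sum_congr rfl fun i _ => by rw [bd_push]

lemma tau_sd (ξ : ι → F) (g : ι → G) (ap : List V → V)
    (hap : ∀ (g : G), ∀ l ≠ [], ap (l.map (g +ᵥ ·)) = g +ᵥ ap l) (x : List V →₀ F) :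
    sd ap (tau ξ g x) = tau ξ g (sd ap x) := by
  simp only [tau_apply, map_sum, map_smul, map_sub]
  exact Finset.sum_congr rfl fun i _ => by rw [push_sd ap _ (hap _)]

lemma comm_pow {M N : Type*} [AddCommGroup M] [Module F M] [AddCommGroup N] [Module F N]
    {φ : M →ₗ[F] N} {S : Module.End F M} {T : Module.End F N} (h : ∀ x, φ (S x) = T (φ x))
    (n : ℕ) (x : M) : φ ((S ^ n) x) = (T ^ n) (φ x) := by
  induction n generalizing x with
  | zero => simp
  | succ n ih => rw [pow_succ, Module.End.mul_apply, ih, h, pow_succ, Module.End.mul_apply]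

lemma tau_supported (ξ : ι → F) (g : ι → G) {s : Set (List V)}
    (hs : ∀ (g : G), ∀ l ∈ s, l.map (g +ᵥ ·) ∈ s) {x : List V →₀ F}
    (hx : x ∈ Finsupp.supported F F s) : tau ξ g x ∈ Finsupp.supported F F s := by
  rw [tau_apply]
  refine Submodule.sum_mem _ fun i _ => Submodule.smul_mem _ _ (Submodule.sub_mem _ ?_ hx)
  refine map_mem_supported _ ?_ hx
  intro l hl
  rw [push_single]
  exact Finsupp.single_mem_supported _ _ (hs _ _ hl)

/-- Evaluation of a cochain on a chain. -/
noncomputable def ev (φ : List V → F) : (List V →₀ F) →ₗ[F] F := Finsupp.linearCombination F φ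

@[simp] lemma ev_single (φ : List V → F) (l : List V) (a : F) : ev φ (single l a) = a * φ l := by
  simp [ev, Finsupp.linearCombination_single]

/-- The cup product of the 0-cochain `α ∘ lam` with `θ`. -/
def cup0 (lam : V → ZMod p) (θ : List V → F) (α : ZMod p → F) : List V → F
  | [] => 0
  | v :: l => α (lam v) * θ (v :: l)

/-- The cup product of a 1-cochain pulled back by `lam` with `θ`. -/
def cup1 (lam : V → ZMod p) (θ : List V → F) (β : ZMod p → ZMod p → F) : List V → F
  | v₀ :: v₁ :: l => β (lam v₀) (lam v₁) * θ (v₁ :: l)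
  | _ => 0

/-- The iterated cup product of the pulled back carry cocycles of the given labellings. -/
def theta (F : Type*) [Field F] : List (V → ZMod p) → List V → F
  | [], [_] => 1
  | lam :: L, v₀ :: v₁ :: v₂ :: l =>
    (carry (lam v₁ - lam v₀) (lam v₂ - lam v₁) : F) * theta F L (v₂ :: l)
  | _, _ => 0

lemma cup0_ev_cone (lam : V → ZMod p) (θ : List V → F) (α : ZMod p → F) (v : V)
    (x : List V →₀ F) : ev (cup0 lam θ α) (cone v x) = α (lam v) * ev θ (cone v x) := by
  induction x using Finsupp.induction_linear with
  | zero => simp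
  | add x y hx hy => simp only [map_add, hx, hy, mul_add]
  | single l a => simp [cup0]; ring

lemma cup0_const (lam : V → ZMod p) (L : List (V → ZMod p)) (a : F) (x : List V →₀ F) :
    ev (cup0 lam (theta F L) fun _ => a) x = a * ev (theta F L) x := by
  induction x using Finsupp.induction_linear with
  | zero => simp
  | add x y hx hy => simp only [map_add, hx, hy, mul_add]
  | single l b =>
    rcases l with _ | ⟨v, l⟩
    · cases L <;> simp [cup0, theta]
    · simp [cup0]; ring

lemma cup1_ev_cone (lam : V → ZMod p) (θ : List V → F) (β : ZMod p → ZMod p → F) (v w : V)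
    (x : List V →₀ F) : ev (cup1 lam θ β) (cone v (cone w x)) =
      β (lam v) (lam w) * ev θ (cone w x) := by
  induction x using Finsupp.induction_linear with
  | zero => simp
  | add x y hx hy => simp only [map_add, hx, hy, mul_add]
  | single l a => simp [cup1]; ring

/-- A cocycle satisfies `θ (v ∂(w l)) = θ (w l)`. -/
lemma ev_cone_bdList {θ : List V → F} (hθ : ∀ l, ev θ (bdList l) = 0) (v w : V) (l : List V) :
    ev θ (cone v (bdList (w :: l))) = θ (w :: l) := by
  have := hθ (v :: w :: l)
  rw [bdList, map_sub, ev_single, one_mul, sub_eq_zero] at this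
  exact this.symm

lemma cup0_bd {θ : List V → F} (hθ : ∀ l, ev θ (bdList l) = 0) (lam : V → ZMod p)
    (α : ZMod p → F) (x : List V →₀ F) :
    ev (cup0 lam θ α) (bd x) = ev (cup1 lam θ fun c₀ c₁ => α c₁ - α c₀) x := by
  induction x using Finsupp.induction_linear with
  | zero => simp
  | add x y hx hy => simp only [map_add, hx, hy]
  | single l a =>
    rw [bd_single, map_smul, ev_single, smul_eq_mul]
    congr 1
    rcases l with _ | ⟨v, _ | ⟨w, l⟩⟩
    · simp [bdList, cup1]
    · simp [bdList, cup1, cup0]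
    · rw [bdList, map_sub, cup0_ev_cone, ev_cone_bdList hθ]
      simp [cup0, cup1]; ring

lemma theta_cons_bd {θ : List V → F} {L : List (V → ZMod p)} (hL : theta F L = θ)
    (hθ : ∀ l, ev θ (bdList l) = 0) (lam : V → ZMod p) (x : List V →₀ F) :
    ev (theta F (lam :: L)) x =
      ev (cup1 lam θ fun c₀ c₁ => (carry c₀ (c₁ - c₀) : F)) (bd x) := by
  induction x using Finsupp.induction_linear with
  | zero => simp
  | add x y hx hy => simp only [map_add, hx, hy]
  | single l a =>
    rw [bd_single, map_smul, ev_single, smul_eq_mul]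
    congr 1
    rcases l with _ | ⟨v₀, _ | ⟨v₁, _ | ⟨v₂, l⟩⟩⟩
    · simp [bdList, theta]
    · simp [bdList, theta, cup1]
    · simp [bdList, theta, cup1]
    · rw [bdList, bdList, map_sub, map_sub, map_sub, cup1_ev_cone, ev_cone_bdList hθ]
      simp only [ev_single, cone_single, cup1, theta, hL, one_mul]
      have h := carry_cocycle (lam v₀) (lam v₁ - lam v₀) (lam v₂ - lam v₁)
      rw [add_sub_cancel, sub_add_sub_cancel'] at h
      have h' := congrArg (Nat.cast : ℕ → F) h
      push_cast at h'
      linear_combination (-θ (v₂ :: l)) * h'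

lemma ev_theta_bdList (L : List (V → ZMod p)) (l : List V) :
    ev (theta F L) (bdList l) = 0 := by
  induction L generalizing l with
  | nil =>
    rcases l with _ | ⟨v₀, _ | ⟨v₁, _ | ⟨v₂, l⟩⟩⟩
    · simp [bdList]
    · simp [bdList, theta]
    · simp [bdList, theta]
    · rw [bdList, bdList, map_sub, map_sub, map_sub]
      have : ∀ x : List V →₀ F, ev (theta F ([] : List (V → ZMod p))) (cone v₀ (cone v₁ x)) = 0 := by
        intro x
        induction x using Finsupp.induction_linear with
        | zero => simp
        | add x y hx hy => simp only [map_add, hx, hy, add_zero]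
        | single l a => simp [theta]
      rw [this]
      simp [theta]
  | cons lam L ih => rw [theta_cons_bd rfl ih, bd_bdList, map_zero]

/-- The cocycles `theta` are invariant. -/
lemma theta_map (L : List (V → ZMod p)) (g : G)
    (hL : ∀ lam ∈ L, ∃ c, ∀ v, lam (g +ᵥ v) = lam v + c) (l : List V) :
    theta F L (l.map (g +ᵥ ·)) = theta F L l := by
  induction L generalizing l with
  | nil => rcases l with _ | ⟨v₀, _ | ⟨v₁, l⟩⟩ <;> simp [theta]
  | cons lam L ih =>
    obtain ⟨c, hc⟩ := hL lam (by simp)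
    rcases l with _ | ⟨v₀, _ | ⟨v₁, _ | ⟨v₂, l⟩⟩⟩
    · simp [theta]
    · simp [theta]
    · simp [theta]
    · have := ih (fun lam' h => hL lam' (by simp [h])) (v₂ :: l)
      simp only [List.map_cons] at this
      simp [theta, hc, this]

lemma ev_push (f : V → V) (φ : List V → F) (x : List V →₀ F) :
    ev φ (push f x) = ev (fun l => φ (l.map f)) x := by
  induction x using Finsupp.induction_linear with
  | zero => simp
  | add x y hx hy => simp only [map_add, hx, hy]
  | single l a => simp

lemma ev_tau (ξ : ι → F) (g : ι → G) (φ ψ : List V → F)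
    (h : ∀ l, ψ l = ∑ i, ξ i * (φ (l.map (g i +ᵥ ·)) - φ l)) (x : List V →₀ F) :
    ev φ (tau ξ g x) = ev ψ x := by
  induction x using Finsupp.induction_linear with
  | zero => simp
  | add x y hx hy => simp only [map_add, hx, hy]
  | single l a =>
    rw [tau_apply]
    simp only [push_single, map_sum, map_smul, map_sub, ev_single, h, Finset.mul_sum, smul_eq_mul]
    exact Finset.sum_congr rfl fun i _ => by ring

/-- The evaluation of the tower drops by one cocycle at the cost of a nonzero factor. -/
lemma theta_eval_step (ξ : ι → F) (g : ι → G) (hm : G →+ ZMod p) (lam : V → ZMod p)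
    (hlam : ∀ (g : G) v, lam (g +ᵥ v) = lam v + hm g) (L : List (V → ZMod p))
    (hL : ∀ lam ∈ L, ∀ g : G, ∃ c, ∀ v, lam (g +ᵥ v) = lam v + c)
    (x₁ x₂ x₃ : List V →₀ F) (h₂ : bd x₂ = tau ξ g x₁) (h₃ : bd x₃ = (tau ξ g ^ (p - 1)) x₂) :
    ev (theta F (lam :: L)) x₃ =
      (∑ i, ξ i * ((hm (g i)).val : F)) ^ p * ev (theta F L) x₁ := by
  have hθ := ev_theta_bdList (F := F) L
  have hinv : ∀ (g : G) l, theta F L (l.map (g +ᵥ ·)) = theta F L l :=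
    fun g l => theta_map L g (fun lam h => hL lam h g) l
  set D := diff ξ (fun i => hm (g i)) with hD
  have A : ∀ α x, ev (cup0 lam (theta F L) α) (tau ξ g x) =
      ev (cup0 lam (theta F L) (D α)) x := by
    intro α x
    refine ev_tau ξ g _ _ ?_ x
    rintro (_ | ⟨v, l⟩)
    · simp [cup0]
    · have := fun i => hinv (g i) (v :: l)
      simp only [List.map_cons] at this
      simp only [cup0, List.map_cons, this, hlam, hD, diff, LinearMap.coe_mk, AddHom.coe_mk,
        Finset.sum_mul]
      exact Finset.sum_congr rfl fun i _ => by ring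
  have B : ∀ (β β' : ZMod p → ZMod p → F) x, (∀ c₀ c₁, β' c₀ c₁ =
      ∑ i, ξ i * (β (c₀ + hm (g i)) (c₁ + hm (g i)) - β c₀ c₁)) →
      ev (cup1 lam (theta F L) β) (tau ξ g x) = ev (cup1 lam (theta F L) β') x := by
    intro β β' x h
    refine ev_tau ξ g _ _ ?_ x
    rintro (_ | ⟨v, _ | ⟨w, l⟩⟩)
    · simp [cup1]
    · simp [cup1]
    · have := fun i => hinv (g i) (w :: l)
      simp only [List.map_cons] at this
      simp only [cup1, List.map_cons, this, hlam, h, Finset.sum_mul]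
      exact Finset.sum_congr rfl fun i _ => by ring
  have Bd : ∀ n α x, ev (cup1 lam (theta F L) fun c₀ c₁ => α c₁ - α c₀) ((tau ξ g ^ n) x) =
      ev (cup1 lam (theta F L) fun c₀ c₁ => (D ^ n) α c₁ - (D ^ n) α c₀) x := by
    intro n
    induction n with
    | zero => intro α x; simp
    | succ n ih =>
      intro α x
      rw [pow_succ' (tau ξ g), pow_succ D, Module.End.mul_apply]
      simp only [Module.End.mul_apply]
      rw [← ih]
      refine B _ _ _ ?_
      intro c₀ c₁
      simp only [hD, diff, LinearMap.coe_mk, AddHom.coe_mk, ← Finset.sum_sub_distrib]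
      exact Finset.sum_congr rfl fun i _ => by ring
  have hp1 : p - 1 = (p - 2) + 1 := by have := hp.out.two_le; omega
  rw [theta_cons_bd rfl hθ, h₃, hp1, pow_succ', Module.End.mul_apply]
  rw [B _ (fun c₀ c₁ => betaP ξ (fun i => hm (g i)) c₁ - betaP ξ (fun i => hm (g i)) c₀), Bd,
    ← cup0_bd hθ, h₂, A, ← Module.End.mul_apply, ← pow_succ', ← hp1]
  · have e : (D ^ (p - 1)) (betaP ξ fun i => hm (g i)) =
        fun _ => (∑ i, ξ i * ((hm (g i)).val : F)) ^ p := by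
      funext c
      exact diff_pow_betaP ξ _ c
    rw [e, cup0_const]
  · intro c₀ c₁
    simp only [betaP, ← Finset.sum_sub_distrib]
    refine Finset.sum_congr rfl fun i _ => ?_
    rw [add_sub_add_right_eq_sub]
    have h1 := carry_cocycle c₀ (c₁ - c₀) (hm (g i))
    have h2 := carry_cocycle c₀ (hm (g i)) (c₁ - c₀)
    rw [add_sub_cancel] at h1
    rw [carry_comm (hm (g i)), add_comm (hm (g i))] at h2
    have h1' := congrArg (Nat.cast : ℕ → F) h1
    have h2' := congrArg (Nat.cast : ℕ → F) h2
    push_cast at h1' h2'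
    linear_combination ξ i * (h1' - h2')

lemma theta_nil_eval (x : List V →₀ F) (h : bd x = single [] 1) :
    ev (theta F ([] : List (V → ZMod p))) x = 1 := by
  have key : ∀ y : List V →₀ F, ev (theta F ([] : List (V → ZMod p))) y = bd y [] := by
    intro y
    induction y using Finsupp.induction_linear with
    | zero => simp
    | add x y hx hy => simp only [map_add, hx, hy, Finsupp.add_apply]
    | single l a =>
      have hc : ∀ (v : V) (y : List V →₀ F), cone v y [] = 0 := by
        intro v y
        induction y using Finsupp.induction_linear with
        | zero => simp
        | add x y hx hy => simp only [map_add, hx, hy, Finsupp.add_apply, add_zero]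
        | single l a => simp
      rcases l with _ | ⟨v₀, _ | ⟨v₁, l⟩⟩
      · simp [bdList, theta]
      · simp [bdList, theta]
      · simp [bdList, theta, hc]
  rw [key, h]
  simp

/-- A sequence of chains whose boundaries are given alternately by `tau` and its `(p-1)`-st power,
starting from the empty list, which has degree `-1`. As `tau ^ p = 0`, this is the pattern of the
minimal resolution of a cyclic group of order `p`. -/
structure ChainTower (ξ : ι → F) (g : ι → G) (p n : ℕ) (u : ℕ → (List V →₀ F)) : Prop where
  zero : u 0 = single [] 1
  one : bd (u 1) = u 0
  even : ∀ k, 1 ≤ k → 2 * k ≤ n → bd (u (2 * k)) = tau ξ g (u (2 * k - 1))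
  odd : ∀ k, 1 ≤ k → 2 * k + 1 ≤ n → bd (u (2 * k + 1)) = (tau ξ g ^ (p - 1)) (u (2 * k))

/-- The product of the Bockstein classes of the labellings does not vanish on a chain tower, provided
that every labelling pairs nontrivially with the element `tau`. -/
lemma theta_eval (ξ : ι → F) (g : ι → G) {n : ℕ} {u : ℕ → (List V →₀ F)}
    (hu : ChainTower ξ g p (2 * n + 1) u)
    (L : List (V → ZMod p)) (hlen : L.length ≤ n)
    (hL : ∀ lam ∈ L, ∃ hm : G →+ ZMod p, (∀ (g : G) v, lam (g +ᵥ v) = lam v + hm g) ∧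
      ∑ i, ξ i * ((hm (g i)).val : F) ≠ 0) :
    ev (theta F L) (u (2 * L.length + 1)) ≠ 0 := by
  induction L with
  | nil =>
    rw [List.length_nil, mul_zero, zero_add, theta_nil_eval _ (hu.one.trans hu.zero)]
    exact one_ne_zero
  | cons lam L ih =>
    obtain ⟨hm, h1, h2⟩ := hL lam (by simp)
    rw [List.length_cons] at hlen ⊢
    rw [theta_eval_step ξ g hm lam h1 L _ (u (2 * L.length + 1)) (u (2 * (L.length + 1))) _
      (hu.even _ (by omega) (by omega)) (hu.odd _ (by omega) (by omega))]
    · exact mul_ne_zero (pow_ne_zero _ h2) (ih (by omega) fun lam' h => hL lam' (by simp [h]))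
    · intro lam' h g
      obtain ⟨hm', h1', -⟩ := hL lam' (by simp [h])
      exact ⟨hm' g, h1' g⟩

/-- On a list sorted by `κ` on which the labellings are constant along the levels of `κ`, the
cocycle vanishes as soon as `κ` takes too few values. -/
lemma theta_vanish (κ : V → ℕ) (lam : ℕ → V → ZMod p) (n : ℕ) : ∀ (t : ℕ) (l : List V),
    (∀ v ∈ l, 2 * t ≤ κ v ∧ κ v < 2 * (t + n)) →
    l.Pairwise (fun v w => κ v ≤ κ w ∧ (κ v = κ w → lam (κ v / 2) v = lam (κ v / 2) w)) →
    theta F ((List.range' t n).map lam) l = 0 := by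
  induction n with
  | zero =>
    intro t l h _
    rcases l with _ | ⟨v₀, l⟩
    · simp [theta]
    · have := h v₀ (by simp); omega
  | succ n ih =>
    intro t l h hp
    rw [List.range'_succ, List.map_cons]
    rcases l with _ | ⟨v₀, _ | ⟨v₁, _ | ⟨v₂, l⟩⟩⟩
    · simp [theta]
    · simp [theta]
    · simp [theta]
    simp only [theta]
    have b0 := h v₀ (by simp)
    have b1 := h v₁ (by simp)
    have b2 := h v₂ (by simp)
    rw [List.pairwise_cons, List.pairwise_cons] at hp
    have c01 := hp.1 v₁ (by simp)
    have c12 := hp.2.1 v₂ (by simp)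
    by_cases hk : 2 * (t + 1) ≤ κ v₂
    · rw [ih (t + 1) (v₂ :: l), mul_zero]
      · intro v hv
        refine ⟨?_, by have := h v (by simp [List.mem_cons.1 hv]); omega⟩
        rcases List.mem_cons.1 hv with rfl | hv
        · exact hk
        · exact hk.trans ((List.pairwise_cons.1 hp.2.2).1 v hv).1
      · exact hp.2.2
    · have : carry (lam t v₁ - lam t v₀) (lam t v₂ - lam t v₁) = 0 := by
        by_cases h01 : κ v₀ = κ v₁
        · have := c01.2 h01
          rw [show κ v₀ / 2 = t by omega] at this
          rw [this, sub_self, carry_zero_left]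
        · have := c12.2 (by omega)
          rw [show κ v₁ / 2 = t by omega] at this
          rw [this, sub_self, carry_comm, carry_zero_left]
      rw [this, Nat.cast_zero, zero_mul]

/-- In a chain tower of length `2 n + 1`, some list is not both sorted by `κ` and compatible with
the equivariant labellings `lam`. -/
theorem exists_bad_list (ξ : ι → F) (g : ι → G) {n : ℕ} {u : ℕ → (List V →₀ F)}
    (hu : ChainTower ξ g p (2 * n + 1) u) (κ : V → ℕ) (hκ : ∀ v, κ v < 2 * n)
    (lam : ℕ → V → ZMod p) (hm : ℕ → G →+ ZMod p)
    (hlam : ∀ t < n, ∀ (g : G) v, lam t (g +ᵥ v) = lam t v + hm t g)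
    (hne : ∀ t < n, ∑ i, ξ i * ((hm t (g i)).val : F) ≠ 0) :
    ∃ l ∈ (u (2 * n + 1)).support,
      ¬ l.Pairwise (fun v w => κ v ≤ κ w ∧ (κ v = κ w → lam (κ v / 2) v = lam (κ v / 2) w)) := by
  by_contra! hcon
  have h1 := theta_eval ξ g hu ((List.range' 0 n).map lam) (by simp) (by
    intro lam' h
    obtain ⟨t, ht, rfl⟩ := List.mem_map.1 h
    rw [List.mem_range'_1] at ht
    exact ⟨hm t, hlam t (by omega), hne t (by omega)⟩)
  rw [List.length_map, List.length_range'] at h1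
  refine h1 ?_
  rw [ev, Finsupp.linearCombination_apply, Finsupp.sum]
  refine Finset.sum_eq_zero fun l hl => ?_
  rw [theta_vanish κ lam n 0 l (fun v _ => ⟨by omega, by have := hκ v; omega⟩) (hcon l hl),
    smul_zero]

end Tower
end RainbowTverberg

namespace RainbowTverberg
open Finsupp

/-! ### Equivariant chains in an acyclic complex -/

section Build

variable {p : ℕ} [hp : Fact p.Prime] {F : Type*} [Field F] [CharP F p]
  {ι : Type*} [Fintype ι] {G : Type*} [AddCommGroup G] {V W : Type*} [AddAction G V]
  [AddAction G W]

omit hp [CharP F p] in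
lemma ChainTower.map {ξ : ι → F} {g : ι → G} {n : ℕ} {u : ℕ → (List V →₀ F)}
    (hu : ChainTower ξ g p n u) (φ : (List V →₀ F) →ₗ[F] (List W →₀ F))
    (h0 : φ (single [] 1) = single [] 1) (hbd : ∀ x, bd (φ x) = φ (bd x))
    (htau : ∀ x, φ (tau ξ g x) = tau ξ g (φ x)) : ChainTower ξ g p n fun k => φ (u k) where
  zero := by rw [hu.zero, h0]
  one := by rw [hbd, hu.one]
  even k h1 h2 := by rw [hbd, hu.even k h1 h2, htau]
  odd k h1 h2 := by rw [hbd, hu.odd k h1 h2, comm_pow htau]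

/-- The coefficients of the differentials in the minimal resolution. -/
noncomputable def resOp (p : ℕ) (ξ : ι → F) (g : ι → G) (k : ℕ) : Module.End F (List V →₀ F) :=
  if k = 0 then 1 else if k % 2 = 1 then tau ξ g else tau ξ g ^ (p - 1)

open Classical in
/-- Chains built degree by degree by filling cycles. -/
noncomputable def fillSeq (p : ℕ) (R : V → V → Prop) (ξ : ι → F) (g : ι → G) :
    ℕ → (List V →₀ F)
  | 0 => single [] 1
  | k + 1 => if h : ∃ w ∈ Finsupp.supported F F (Flag R Set.univ (k + 1)),
      bd w = resOp p ξ g k (fillSeq p R ξ g k) then h.choose else 0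

/-- Acyclicity allows the construction of a chain tower. -/
theorem exists_tower {R : V → V → Prop} (hinv : ∀ (g : G) a b, R a b → R (g +ᵥ a) (g +ᵥ b))
    (ξ : ι → F) {g : ι → G} (hg : ∀ i, p • g i = 0) (n : ℕ)
    (hac : ∀ k ≤ n, Acyc F R Set.univ k) :
    ∃ u : ℕ → (List V →₀ F), ChainTower ξ g p (n + 1) u ∧
      ∀ k ≤ n + 1, u k ∈ Finsupp.supported F F (Flag R Set.univ k) := by
  set u := fillSeq p R ξ g with hu
  have htauF : ∀ k, ∀ x ∈ Finsupp.supported F F (Flag R Set.univ k),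
      tau ξ g x ∈ Finsupp.supported F F (Flag R Set.univ k) := by
    intro k x hx
    refine tau_supported ξ g ?_ hx
    rintro g l ⟨h1, -, h3⟩
    refine ⟨by simpa using h1, by simp, ?_⟩
    intro a' ha' b' hb'
    obtain ⟨a, ha, rfl⟩ := List.mem_map.1 ha'
    obtain ⟨b, hb, rfl⟩ := List.mem_map.1 hb'
    exact hinv g _ _ (h3 a ha b hb)
  have hopF : ∀ m k, ∀ x ∈ Finsupp.supported F F (Flag R Set.univ k),
      resOp p ξ g m x ∈ Finsupp.supported F F (Flag R Set.univ k) := by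
    intro m k x hx
    have hpow : ∀ j, (tau ξ g ^ j) x ∈ Finsupp.supported F F (Flag R Set.univ k) := by
      intro j
      induction j with
      | zero => simpa using hx
      | succ j ih => rw [pow_succ', Module.End.mul_apply]; exact htauF _ _ ih
    rw [resOp]
    split_ifs
    · exact hx
    · exact htauF _ _ hx
    · exact hpow _
  have hopbd : ∀ m (x : List V →₀ F), bd (resOp p ξ g m x) = resOp p ξ g m (bd x) := by
    intro m x
    rw [resOp]
    split_ifs
    · rfl
    · exact tau_bd ξ g x
    · exact comm_pow (tau_bd ξ g) _ x
  have hu0 : u 0 = single [] 1 := rfl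
  have hopop : ∀ m (x : List V →₀ F), 1 ≤ m → resOp p ξ g (m + 1) (resOp p ξ g m x) = 0 := by
    intro m x hm
    have ht := tau_pow (V := V) ξ hg
    have hp1 : p = (p - 1) + 1 := by have := hp.out.one_le; omega
    have hm0 : m ≠ 0 := by omega
    have hm1 : m + 1 ≠ 0 := by omega
    unfold resOp
    rw [if_neg hm1, if_neg hm0]
    by_cases hm2 : m % 2 = 1
    · have hm3 : ¬ (m + 1) % 2 = 1 := by omega
      rw [if_neg hm3, if_pos hm2, ← Module.End.mul_apply, ← pow_succ, ← hp1, ht]; rfl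
    · have hm3 : (m + 1) % 2 = 1 := by omega
      rw [if_pos hm3, if_neg hm2, ← Module.End.mul_apply, ← pow_succ', ← hp1, ht]; rfl
  have key : ∀ k ≤ n + 1, u k ∈ Finsupp.supported F F (Flag R Set.univ k) ∧
      bd (resOp p ξ g k (u k)) = 0 ∧
      (∀ j, k = j + 1 → bd (u k) = resOp p ξ g j (u j)) := by
    intro k
    induction k with
    | zero =>
      intro _
      refine ⟨Finsupp.single_mem_supported _ _ ⟨rfl, by simp, by simp⟩, ?_, by omega⟩
      rw [hopbd, hu0]
      simp [bdList]
    | succ k ih =>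
      intro hk
      obtain ⟨h1, h2, h3⟩ := ih (by omega)
      obtain ⟨w, hw, hwb⟩ := hac k (by omega) _ (hopF k k _ h1) h2
      have hex : ∃ w ∈ Finsupp.supported F F (Flag R Set.univ (k + 1)),
        bd w = resOp p ξ g k (u k) := ⟨w, hw, hwb⟩
      have hdef : u (k + 1) = hex.choose := by
        exact dif_pos hex
      have hb : bd (u (k + 1)) = resOp p ξ g k (u k) := by rw [hdef]; exact hex.choose_spec.2
      refine ⟨by rw [hdef]; exact hex.choose_spec.1, ?_, ?_⟩
      · rw [hopbd, hb]
        rcases k with _ | k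
        · rw [hu0]
          simp [resOp, tau_apply]
        · exact hopop _ _ (by omega)
      · intro j hj
        obtain rfl : k = j := by omega
        exact hb
  refine ⟨u, ⟨hu0, ?_, ?_, ?_⟩, fun k hk => (key k hk).1⟩
  · rw [(key 1 (by omega)).2.2 0 rfl, resOp, if_pos rfl]; rfl
  · intro k h1 h2
    rw [(key (2 * k) (by omega)).2.2 (2 * k - 1) (by omega), resOp, if_neg (by omega),
      if_pos (by omega)]
  · intro k h1 h2
    rw [(key (2 * k + 1) (by omega)).2.2 (2 * k) rfl, resOp, if_neg (by omega),
      if_neg (by omega)]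

end Build

/-! ### Geometric realization and fine subdivisions -/

section Geometry

variable {G : Type*} [AddCommGroup G] {V : Type*} [Fintype V] [AddAction G V]

/-- The geometric realization of the flag complex of `R`: points of the standard simplex whose
support is a clique. -/
@[ext]
structure Geo (R : V → V → Prop) where
  /-- The barycentric coordinates. -/
  val : V → ℝ
  nonneg : ∀ v, 0 ≤ val v
  sum_eq : ∑ v, val v = 1
  clique : ∀ a b, val a ≠ 0 → val b ≠ 0 → R a b

variable {R : V → V → Prop}

noncomputable instance : MetricSpace (Geo R) :=
  MetricSpace.induced Geo.val (fun _ _ => Geo.ext) inferInstance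

lemma geo_dist (x y : Geo R) : dist x y = dist x.val y.val := rfl

/-- `R` is an equivariant reflexive symmetric relation with no edge inside an orbit. -/
structure EqRel (G : Type*) [AddCommGroup G] {V : Type*} [AddAction G V]
    (R : V → V → Prop) : Prop where
  refl : ∀ a, R a a
  inv : ∀ (g : G) a b, R a b → R (g +ᵥ a) (g +ᵥ b)
  free : ∀ (g : G) a, R a (g +ᵥ a) → g = 0

variable [hR : Fact (EqRel G R)]

instance : AddAction G (Geo R) where
  vadd g x := ⟨fun v => x.1 (-g +ᵥ v), fun v => x.nonneg _, by
    refine Eq.trans ?_ x.sum_eq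
    exact Fintype.sum_equiv (AddAction.toPerm (-g)) _ _ fun v => rfl, by
    intro a b ha hb
    have := hR.out.inv g _ _ (x.clique _ _ ha hb)
    rwa [vadd_neg_vadd, vadd_neg_vadd] at this⟩
  zero_vadd x := Geo.ext (by funext v; change x.1 (-(0 : G) +ᵥ v) = x.1 v; rw [neg_zero, zero_vadd])
  add_vadd g h x := Geo.ext (by
    funext v
    change x.1 (-(g + h) +ᵥ v) = x.1 (-h +ᵥ (-g +ᵥ v))
    rw [← add_vadd, neg_add_rev])

lemma geo_vadd (g : G) (x : Geo R) (v : V) : (g +ᵥ x).1 v = x.1 (-g +ᵥ v) := rfl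

omit [AddAction G V] hR in
lemma geo_exists_ne (x : Geo R) : ∃ v, x.1 v ≠ 0 := by
  by_contra! h
  have := x.sum_eq
  simp [h] at this

lemma geo_free {g : G} {x : Geo R} (h : g +ᵥ x = x) : g = 0 := by
  obtain ⟨v, hv⟩ := geo_exists_ne x
  have h1 : (g +ᵥ x).1 (g +ᵥ v) = x.1 v := by rw [geo_vadd, neg_vadd_vadd]
  rw [h] at h1
  exact hR.out.free g v (x.clique _ _ hv (by rwa [h1]))

open Classical in
/-- The vertex `v` as a point. -/
noncomputable def geoPt (hrefl : ∀ a, R a a) (v : V) : Geo R :=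
  ⟨Pi.single v 1, fun w => by
    rw [Pi.single_apply]; split_ifs <;> norm_num, by simp, by
    intro a b ha hb
    have h1 : a = v := by by_contra h; exact ha (Pi.single_eq_of_ne h _)
    have h2 : b = v := by by_contra h; exact hb (Pi.single_eq_of_ne h _)
    rw [h1, h2]; exact hrefl v⟩

lemma geoPt_vadd (hrefl : ∀ a, R a a) (g : G) (v : V) :
    geoPt hrefl (g +ᵥ v) = g +ᵥ geoPt hrefl v := by
  classical
  refine Geo.ext ?_
  funext w
  rw [geo_vadd]
  have : w = g +ᵥ v ↔ -g +ᵥ w = v := by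
    constructor
    · rintro rfl; rw [neg_vadd_vadd]
    · rintro rfl; rw [vadd_neg_vadd]
  simp only [geoPt, Pi.single_apply, this]

omit [AddCommGroup G] [AddAction G V] hR [Fintype V] in
/-- The barycenter of a list of points, as a function. -/
noncomputable def baryFun (l : List (V → ℝ)) : V → ℝ := (l.length : ℝ)⁻¹ • l.sum

lemma baryFun_eq (l : List (V → ℝ)) :
    baryFun l = ∑ i : Fin l.length, (l.length : ℝ)⁻¹ • l[i] := by
  rw [baryFun, ← Finset.smul_sum]
  congr 1
  exact (Fin.sum_univ_getElem l).symm

lemma baryFun_mem {l : List (V → ℝ)} (hl : l ≠ []) {C : Set (V → ℝ)} (hC : Convex ℝ C)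
    (h : ∀ x ∈ l, x ∈ C) : baryFun l ∈ C := by
  have hn : (l.length : ℝ) ≠ 0 := by simpa using hl
  rw [baryFun_eq]
  refine hC.sum_mem (fun _ _ => by positivity) ?_ (fun i _ => h _ (List.getElem_mem _))
  simp [hn]

lemma dist_baryFun_le {l : List (V → ℝ)} (hl : l ≠ []) {δ : ℝ} (hδ : 0 ≤ δ)
    (h : ∀ x ∈ l, ∀ y ∈ l, dist x y ≤ δ) {M : ℕ} (hM : l.length ≤ M) {y : V → ℝ} (hy : y ∈ l) :
    dist (baryFun l) y ≤ (M / (M + 1) : ℝ) * δ := by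
  classical
  have hn : (0 : ℝ) < l.length := by
    have := List.length_pos_iff.2 hl
    exact_mod_cast this
  obtain ⟨j, hj, rfl⟩ := List.mem_iff_getElem.1 hy
  have e : baryFun l - l[j] = ∑ i : Fin l.length, (l.length : ℝ)⁻¹ • (l[i] - l[j]) := by
    rw [baryFun_eq]
    simp only [smul_sub, Finset.sum_sub_distrib, Finset.sum_const, Finset.card_univ,
      Fintype.card_fin]
    rw [← Nat.cast_smul_eq_nsmul ℝ, smul_smul, mul_inv_cancel₀ hn.ne', one_smul]
  rw [dist_eq_norm, e]
  have h1 : ‖∑ i : Fin l.length, (l.length : ℝ)⁻¹ • (l[i] - l[j])‖ ≤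
      ∑ i ∈ Finset.univ.erase (⟨j, hj⟩ : Fin l.length), (l.length : ℝ)⁻¹ * δ := by
    rw [← Finset.sum_erase_add _ _ (Finset.mem_univ (⟨j, hj⟩ : Fin l.length))]
    simp only [Fin.getElem_fin, sub_self, smul_zero, add_zero]
    refine norm_sum_le_of_le _ fun i _ => ?_
    rw [norm_smul, Real.norm_of_nonneg (by positivity), ← dist_eq_norm]
    exact mul_le_mul_of_nonneg_left (h _ (List.getElem_mem _) _ (List.getElem_mem _))
      (by positivity)
  refine h1.trans ?_
  rw [Finset.sum_const, Finset.card_erase_of_mem (Finset.mem_univ _), Finset.card_univ,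
    Fintype.card_fin, nsmul_eq_mul, ← mul_assoc]
  refine mul_le_mul_of_nonneg_right ?_ hδ
  have h2 : 1 ≤ l.length := List.length_pos_iff.2 hl
  rw [Nat.cast_sub h2, ← div_eq_mul_inv, div_le_div_iff₀ hn (by positivity)]
  have : (l.length : ℝ) ≤ M := by exact_mod_cast hM
  push_cast
  nlinarith

omit hR [AddCommGroup G] [AddAction G V] in
open Classical in
/-- The barycenter of a list of points; junk unless the points lie in a common simplex. -/
noncomputable def bary (d : Geo R) (l : List (Geo R)) : Geo R :=
  if h : l ≠ [] ∧ ∀ a b, baryFun (l.map Geo.val) a ≠ 0 → baryFun (l.map Geo.val) b ≠ 0 →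
    R a b then ⟨baryFun (l.map Geo.val), fun v => by
      refine baryFun_mem (C := {x | 0 ≤ x v}) (by simpa using h.1) ?_ ?_
      · exact convex_halfSpace_ge (LinearMap.isLinear (LinearMap.proj v)) 0
      · intro x hx
        obtain ⟨z, -, rfl⟩ := List.mem_map.1 hx
        exact z.nonneg v, by
      refine baryFun_mem (C := {x | ∑ v, x v = 1}) (by simpa using h.1) ?_ ?_
      · have := convex_hyperplane (𝕜 := ℝ)
          (LinearMap.isLinear (∑ v, LinearMap.proj v : (V → ℝ) →ₗ[ℝ] ℝ)) 1
        simpa using this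
      · intro x hx
        obtain ⟨z, -, rfl⟩ := List.mem_map.1 hx
        exact z.sum_eq, h.2⟩ else l.headD d

/-- The points of the list `l` are supported in the clique `S`. -/
def InClique (S : Set V) (l : List (Geo R)) : Prop :=
  (∀ a ∈ S, ∀ b ∈ S, R a b) ∧ ∀ x ∈ l, ∀ a, x.1 a ≠ 0 → a ∈ S

lemma convex_suppIn (S : Set V) : Convex ℝ {x : V → ℝ | ∀ a, x a ≠ 0 → a ∈ S} := by
  intro x hx y hy s t _ _ _ a ha
  by_contra h
  have h1 : x a = 0 := by by_contra h'; exact h (hx a h')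
  have h2 : y a = 0 := by by_contra h'; exact h (hy a h')
  simp [h1, h2] at ha

lemma bary_val (d : Geo R) {l : List (Geo R)} (hl : l ≠ []) {S : Set V} (hS : InClique S l) :
    (bary d l).1 = baryFun (l.map Geo.val) := by
  have h1 : ∀ a, baryFun (l.map Geo.val) a ≠ 0 → a ∈ S := by
    refine baryFun_mem (by simpa using hl) (convex_suppIn S) ?_
    intro x hx
    obtain ⟨z, hz, rfl⟩ := List.mem_map.1 hx
    exact hS.2 z hz
  rw [bary, dif_pos ⟨hl, fun a b ha hb => hS.1 a (h1 a ha) b (h1 b hb)⟩]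

lemma baryFun_vadd (g : G) (l : List (Geo R)) (v : V) :
    baryFun ((l.map (g +ᵥ ·)).map Geo.val) v = baryFun (l.map Geo.val) (-g +ᵥ v) := by
  have : ∀ l : List (Geo R), ((l.map (g +ᵥ ·)).map Geo.val).sum v =
      (l.map Geo.val).sum (-g +ᵥ v) := by
    intro l
    induction l with
    | nil => simp
    | cons x l ih =>
      simp only [List.map_cons, List.sum_cons, Pi.add_apply, ih, geo_vadd]
  simp only [baryFun, Pi.smul_apply, this, List.length_map]

lemma bary_vadd (d : Geo R) (g : G) {l : List (Geo R)} (hl : l ≠ []) :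
    bary d (l.map (g +ᵥ ·)) = g +ᵥ bary d l := by
  by_cases h : ∀ a b, baryFun (l.map Geo.val) a ≠ 0 → baryFun (l.map Geo.val) b ≠ 0 →
    R a b
  · have h' : ∀ a b, baryFun ((l.map (g +ᵥ ·)).map Geo.val) a ≠ 0 →
        baryFun ((l.map (g +ᵥ ·)).map Geo.val) b ≠ 0 → R a b := by
      intro a b ha hb
      rw [baryFun_vadd] at ha hb
      have := hR.out.inv g _ _ (h _ _ ha hb)
      rwa [vadd_neg_vadd, vadd_neg_vadd] at this
    rw [bary, bary, dif_pos ⟨by simpa using hl, h'⟩, dif_pos ⟨hl, h⟩]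
    refine Geo.ext ?_
    funext v
    exact baryFun_vadd g l v
  · have h' : ¬ ∀ a b, baryFun ((l.map (g +ᵥ ·)).map Geo.val) a ≠ 0 →
        baryFun ((l.map (g +ᵥ ·)).map Geo.val) b ≠ 0 → R a b := by
      intro h'
      refine h fun a b ha hb => ?_
      have := h' (g +ᵥ a) (g +ᵥ b) (by rwa [baryFun_vadd, neg_vadd_vadd])
        (by rwa [baryFun_vadd, neg_vadd_vadd])
      have := hR.out.inv (-g) _ _ this
      rwa [neg_vadd_vadd, neg_vadd_vadd] at this
    rw [bary, bary, dif_neg fun h0 => h' h0.2, dif_neg fun h0 => h h0.2]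
    obtain ⟨x, l, rfl⟩ := List.exists_cons_of_ne_nil hl
    rfl

/-- The list lies in a common simplex and has diameter at most `δ`. -/
def Small (δ : ℝ) (l : List (Geo R)) : Prop :=
  (∃ S, InClique S l) ∧ ∀ x ∈ l, ∀ y ∈ l, dist x y ≤ δ

/-- Barycentric subdivision shrinks the diameter by the factor `M / (M + 1)`. -/
lemma sd_bary_small {F : Type*} [CommRing F] (d : Geo R) (M : ℕ) {k : ℕ} (hk : k ≤ M) {δ : ℝ}
    (hδ : 0 ≤ δ) {x : List (Geo R) →₀ F}
    (hx : x ∈ Finsupp.supported F F {l | l.length = k ∧ Small δ l}) :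
    sd (bary d) x ∈
      Finsupp.supported F F {l | l.length = k ∧ Small ((M / (M + 1) : ℝ) * δ) l} := by
  refine map_mem_supported _ ?_ hx
  rintro l ⟨hlk, ⟨S, hS⟩, hl⟩
  let Q : List (Geo R) → List (Geo R) → Prop := fun l l' =>
    InClique S l → (∀ x ∈ l, ∀ y ∈ l, dist x y ≤ δ) → l.length ≤ M →
      l'.length = l.length ∧ (∀ x ∈ l', ∀ y ∈ l', dist x y ≤ (M / (M + 1) : ℝ) * δ) ∧
      ∀ C : Set (V → ℝ), Convex ℝ C → (∀ x ∈ l, x.1 ∈ C) → ∀ x ∈ l', x.1 ∈ C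
  have hρ : 0 ≤ (M / (M + 1) : ℝ) * δ := by positivity
  have key := sd_supported (F := F) (bary d) Q (by intro _ _ _; simp) ?_ l
  · refine Finsupp.supported_mono ?_ key
    intro l' hl'
    obtain ⟨h1, h2, h3⟩ := hl' hS hl (hlk.le.trans hk)
    exact ⟨h1.trans hlk, ⟨S, hS.1, h3 _ (convex_suppIn S) hS.2⟩, h2⟩
  · intro l l₀ l' h1 h2 hQ hS hl hlM
    have hne : l ≠ [] := by rintro rfl; simp at h1
    have hb := bary_val d hne hS
    obtain ⟨q1, q2, q3⟩ := hQ ⟨hS.1, fun x hx => hS.2 x (h2.subset hx)⟩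
      (fun x hx y hy => hl x (h2.subset hx) y (h2.subset hy)) (by omega)
    have hball : ∀ y ∈ l', dist (bary d l) y ≤ (M / (M + 1) : ℝ) * δ := by
      intro y hy
      rw [dist_comm, geo_dist, hb]
      refine q3 (Metric.closedBall (baryFun (l.map Geo.val)) _)
        (convex_closedBall _ _) (fun x hx => ?_) y hy
      rw [Metric.mem_closedBall, dist_comm]
      refine dist_baryFun_le (by simpa using hne) hδ ?_ (by simpa using hlM)
        (List.mem_map_of_mem (h2.subset hx))
      intro x' hx' y' hy'
      obtain ⟨x, hx, rfl⟩ := List.mem_map.1 hx'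
      obtain ⟨y, hy, rfl⟩ := List.mem_map.1 hy'
      exact hl x hx y hy
    refine ⟨by simp [q1, h1], ?_, ?_⟩
    · intro x hx y hy
      rcases List.mem_cons.1 hx with hx' | hx' <;> rcases List.mem_cons.1 hy with hy' | hy'
      · rw [hx', hy', dist_self]; exact hρ
      · rw [hx']; exact hball y hy'
      · rw [hy', dist_comm]; exact hball x hx'
      · exact q2 x hx' y hy'
    · intro C hC hlC x hx
      rcases List.mem_cons.1 hx with hx' | hx'
      · rw [hx', hb]
        refine baryFun_mem (by simpa using hne) hC ?_
        intro x hx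
        obtain ⟨z, hz, rfl⟩ := List.mem_map.1 hx
        exact hlC z hz
      · exact q3 C hC (fun x hx => hlC x (h2.subset hx)) x hx'

end Geometry

section Sorting

variable {Z : Type*}

/-- The first element of a list with minimal value of `κ`. -/
def argminList (κ : Z → ℕ) (d : Z) : List Z → Z
  | [] => d
  | [x] => x
  | x :: y :: l => if κ x ≤ κ (argminList κ d (y :: l)) then x else argminList κ d (y :: l)

lemma argminList_spec (κ : Z → ℕ) (d : Z) {l : List Z} (hl : l ≠ []) :
    argminList κ d l ∈ l ∧ ∀ x ∈ l, κ (argminList κ d l) ≤ κ x := by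
  induction l with
  | nil => exact absurd rfl hl
  | cons x l ih =>
    rcases l with _ | ⟨y, l⟩
    · simp [argminList]
    · obtain ⟨h1, h2⟩ := ih (by simp)
      rw [argminList]
      split_ifs with h
      · refine ⟨by simp, fun z hz => ?_⟩
        rcases List.mem_cons.1 hz with rfl | hz
        exacts [le_rfl, h.trans (h2 z hz)]
      · refine ⟨List.mem_cons_of_mem _ h1, fun z hz => ?_⟩
        rcases List.mem_cons.1 hz with rfl | hz
        exacts [(not_le.1 h).le, h2 z hz]

lemma argminList_map (κ : Z → ℕ) (d : Z) (f : Z → Z) (hf : ∀ x, κ (f x) = κ x) {l : List Z}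
    (hl : l ≠ []) : argminList κ d (l.map f) = f (argminList κ d l) := by
  induction l with
  | nil => exact absurd rfl hl
  | cons x l ih =>
    rcases l with _ | ⟨y, l⟩
    · simp [argminList]
    · have := ih (by simp)
      rw [List.map_cons] at this
      rw [List.map_cons, List.map_cons, argminList, argminList, this, hf, hf]
      split_ifs <;> rfl

lemma sd_argmin {F : Type*} [CommRing F] (κ : Z → ℕ) (d : Z) (l : List Z) :
    sd (argminList κ d) (single l (1 : F)) ∈ Finsupp.supported F F
      {l' | l' ⊆ l ∧ l'.Pairwise fun x y => κ x ≤ κ y} := by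
  refine sd_supported (F := F) (argminList κ d)
    (fun l l' => l' ⊆ l ∧ l'.Pairwise fun x y => κ x ≤ κ y) (by simp) ?_ l
  rintro l l₀ l' h1 h2 ⟨h3, h4⟩
  have hne : l ≠ [] := by rintro rfl; simp at h1
  obtain ⟨a1, a2⟩ := argminList_spec κ d hne
  refine ⟨List.cons_subset.2 ⟨a1, fun z hz => h2.subset (h3 hz)⟩, List.pairwise_cons.2 ⟨?_, h4⟩⟩
  exact fun y hy => a2 y (h2.subset (h3 hy))

end Sorting

section Combine

variable {p : ℕ} [hp : Fact p.Prime] {F : Type*} [Field F] [CharP F p]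
  {ι : Type*} [Fintype ι] {G : Type*} [AddCommGroup G] {V : Type*} [Fintype V] [AddAction G V]
  {R : V → V → Prop} [hR : Fact (EqRel G R)]

/-- An acyclic equivariant complex admits no labelling by too few labels. -/
theorem no_labelling [Nonempty V] (ξ : ι → F) {g : ι → G} (hg : ∀ i, p • g i = 0) (n : ℕ)
    (hac : ∀ k ≤ 2 * n, Acyc F R Set.univ k)
    (κ : Geo R → ℕ) (hκ : ∀ v, κ v < 2 * n) (hκG : ∀ (g : G) v, κ (g +ᵥ v) = κ v)
    (lam : ℕ → Geo R → ZMod p) (hm : ℕ → G →+ ZMod p)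
    (hlam : ∀ t < n, ∀ (g : G) v, lam t (g +ᵥ v) = lam t v + hm t g)
    (hne : ∀ t < n, ∑ i, ξ i * ((hm t (g i)).val : F) ≠ 0)
    {ε : ℝ} (hε : 0 < ε) (hcompat : ∀ x y : Geo R, dist x y < ε → κ x = κ y →
      lam (κ x / 2) x = lam (κ x / 2) y) : False := by
  have hrefl := hR.out.refl
  obtain ⟨u, hu, hus⟩ := exists_tower hR.out.inv ξ hg (2 * n) hac
  let d : Geo R := geoPt hrefl (Classical.arbitrary V)
  set M := 2 * n + 1 with hM
  -- the points of the vertices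
  have hu1 := hu.map (push (geoPt hrefl)) (by simp) (bd_push _)
    (tau_push ξ g (geoPt_vadd hrefl))
  have hs1 : ∀ k ≤ M, push (geoPt hrefl) (u k) ∈
      Finsupp.supported F F {l | l.length = k ∧ Small 1 l} := by
    intro k hk
    refine map_mem_supported _ ?_ (hus k hk)
    rintro l ⟨h1, -, h3⟩
    rw [push_single]
    refine Finsupp.single_mem_supported _ _ ⟨by simpa using h1, ⟨{v | v ∈ l}, h3, ?_⟩, ?_⟩
    · intro x hx a ha
      obtain ⟨v, hv, rfl⟩ := List.mem_map.1 hx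
      have : a = v := by
        classical
        by_contra h; exact ha (Pi.single_eq_of_ne h _)
      rw [this]; exact hv
    · intro x _ y _
      rw [geo_dist, dist_pi_le_iff zero_le_one]
      intro v
      have b : ∀ x : Geo R, 0 ≤ x.1 v ∧ x.1 v ≤ 1 := fun x => ⟨x.nonneg v, by
        refine le_of_le_of_eq ?_ x.sum_eq
        exact Finset.single_le_sum (fun i _ => x.nonneg i) (Finset.mem_univ v)⟩
      rw [Real.dist_eq, abs_le]
      constructor <;> linarith [(b x).1, (b x).2, (b y).1, (b y).2]
  have hsub : ∀ N : ℕ, ∃ u' : ℕ → (List (Geo R) →₀ F), ChainTower ξ g p (2 * n + 1) u' ∧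
      ∀ k ≤ M, u' k ∈ Finsupp.supported F F
        {l | l.length = k ∧ Small ((M / (M + 1) : ℝ) ^ N) l} := by
    intro N
    induction N with
    | zero => exact ⟨_, hu1, by simpa using hs1⟩
    | succ N ih =>
      obtain ⟨u', h1, h2⟩ := ih
      refine ⟨_, h1.map (sd (bary d)) (sd_nil _ _) (bd_sd _)
        (tau_sd ξ g _ fun g l hl => bary_vadd d g hl), fun k hk => ?_⟩
      rw [pow_succ']
      exact sd_bary_small d M hk (by positivity) (h2 k hk)
  obtain ⟨N, hN⟩ := exists_pow_lt_of_lt_one hε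
    (show (M / (M + 1) : ℝ) < 1 by rw [div_lt_one (by positivity)]; linarith)
  obtain ⟨u', h1, h2⟩ := hsub N
  have hu2 := h1.map (sd (argminList κ d)) (sd_nil _ _) (bd_sd _)
    (tau_sd ξ g _ fun g l hl => argminList_map κ d _ (hκG g) hl)
  obtain ⟨l, hl, hbad⟩ := exists_bad_list ξ g hu2 κ hκ lam hm hlam hne
  have hs2 : sd (argminList κ d) (u' (2 * n + 1)) ∈ Finsupp.supported F F
      {l | l.Pairwise (fun x y => κ x ≤ κ y) ∧ ∀ x ∈ l, ∀ y ∈ l, dist x y < ε} := by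
    refine map_mem_supported _ ?_ (h2 (2 * n + 1) le_rfl)
    rintro l ⟨-, -, hl⟩
    refine Finsupp.supported_mono ?_ (sd_argmin κ d l)
    rintro l' ⟨a1, a2⟩
    exact ⟨a2, fun x hx y hy => (hl x (a1 hx) y (a1 hy)).trans_lt hN⟩
  obtain ⟨q1, q2⟩ := hs2 hl
  refine hbad ?_
  refine List.Pairwise.imp_of_mem ?_ q1
  intro x y hx hy hxy
  exact ⟨hxy, fun h => hcompat x y (q2 x hx y hy) h⟩

end Combine
end RainbowTverberg

namespace RainbowTverberg
open Finsupp

/-! ### Compactness and the group action on the realization -/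

section Topology

variable {G : Type*} [AddCommGroup G] {V : Type*} [Fintype V] [AddAction G V]
  {R : V → V → Prop}

omit [AddAction G V] [AddCommGroup G] in
lemma geo_val_isometry : Isometry (Geo.val : Geo R → (V → ℝ)) := fun _ _ => rfl

instance : CompactSpace (Geo R) := by
  rw [← isCompact_univ_iff, geo_val_isometry.isUniformInducing.isInducing.isCompact_iff]
  have : (Geo.val : Geo R → (V → ℝ)) '' Set.univ =
      stdSimplex ℝ V ∩ ⋂ a : V, ⋂ b : V, {x | R a b ∨ x a = 0 ∨ x b = 0} := by
    ext x
    simp only [Set.image_univ, Set.mem_range, Set.mem_inter_iff, Set.mem_iInter,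
      Set.mem_ofPred_eq]
    constructor
    · rintro ⟨y, rfl⟩
      refine ⟨⟨y.nonneg, y.sum_eq⟩, fun a b => ?_⟩
      by_contra! h
      exact h.1 (y.clique a b h.2.1 h.2.2)
    · rintro ⟨⟨h1, h2⟩, h3⟩
      refine ⟨⟨x, h1, h2, fun a b ha hb => ?_⟩, rfl⟩
      rcases h3 a b with h | h | h
      exacts [h, absurd h ha, absurd h hb]
  rw [this]
  refine (isCompact_stdSimplex ℝ V).inter_right ?_
  refine isClosed_iInter fun a => isClosed_iInter fun b => ?_
  by_cases h : R a b
  · simp [h]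
  · simp only [h, false_or]
    exact (isClosed_eq (continuous_apply a) continuous_const).union
      (isClosed_eq (continuous_apply b) continuous_const)

variable [hR : Fact (EqRel G R)]

lemma geo_dist_vadd (g : G) (x y : Geo R) : dist (g +ᵥ x) (g +ᵥ y) = dist x y := by
  have key : ∀ (g : G) (x y : Geo R), dist (g +ᵥ x) (g +ᵥ y) ≤ dist x y := by
    intro g x y
    rw [geo_dist, dist_pi_le_iff dist_nonneg]
    intro v
    rw [geo_vadd, geo_vadd]
    exact dist_le_pi_dist x.val y.val _
  refine le_antisymm (key g x y) ?_
  have := key (-g) (g +ᵥ x) (g +ᵥ y)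
  rwa [neg_vadd_vadd, neg_vadd_vadd] at this

/-- A choice of orbit representatives, with the group elements moving them to given points. -/
lemma exists_orbit_rep : ∃ (rep : Geo R → Geo R) (γ : Geo R → G), (∀ x, γ x +ᵥ rep x = x) ∧
    ∀ (g : G) x, rep (g +ᵥ x) = rep x ∧ γ (g +ᵥ x) = g + γ x := by
  let rep : Geo R → Geo R := fun x => (Quotient.mk (AddAction.orbitRel G (Geo R)) x).out
  have h : ∀ x, ∃ g : G, g +ᵥ rep x = x := by
    intro x
    have : (AddAction.orbitRel G (Geo R)) (rep x) x := Quotient.mk_out x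
    obtain ⟨g, hg⟩ := (AddAction.orbitRel G (Geo R)).symm this
    exact ⟨g, hg⟩
  choose γ hγ using h
  have hrep : ∀ (g : G) x, rep (g +ᵥ x) = rep x := by
    intro g x
    have : Quotient.mk (AddAction.orbitRel G (Geo R)) (g +ᵥ x) = Quotient.mk _ x :=
      Quotient.sound ⟨g, rfl⟩
    simp only [rep, this]
  refine ⟨rep, γ, hγ, fun g x => ⟨hrep g x, ?_⟩⟩
  have h1 := hγ (g +ᵥ x)
  rw [hrep] at h1
  have h2 : (-(g + γ x) + γ (g +ᵥ x)) +ᵥ rep x = rep x := by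
    rw [add_vadd, h1]
    nth_rw 2 [← hγ x]
    rw [← add_vadd, ← add_vadd, show -(g + γ x) + g + γ x = 0 by abel, zero_vadd]
  have h3 := geo_free h2
  rwa [neg_add_eq_zero, eq_comm] at h3

end Topology

section Fourier

variable {p : ℕ} [hp : Fact p.Prime] {F : Type*} [Field F] [Fintype F] [Algebra (ZMod p) F]

open Classical in
/-- The sums of `φ` over the level sets of the functional `x ↦ ℓ (b x)`. -/
noncomputable def levelSum (ℓ : F →ₗ[ZMod p] ZMod p) (b : F) (φ : F → ℝ) (c : ZMod p) : ℝ :=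
  ∑ g, if ℓ (b * g) = c then φ g else 0

/-- A function whose sums over all level sets of each functional agree is constant. -/
lemma const_of_levelSum {ℓ : F →ₗ[ZMod p] ZMod p} (hℓ : ℓ ≠ 0) (φ : F → ℝ)
    (h : ∀ b ≠ 0, ∀ c c', levelSum ℓ b φ c = levelSum ℓ b φ c') (x y : F) : φ x = φ y := by
  classical
  set c₀ : ℝ := ∑ b : F, if ℓ b = 0 then 1 else 0 with hc₀
  have hlt : c₀ < Fintype.card F := by
    obtain ⟨b, hb⟩ : ∃ b, ℓ b ≠ 0 := by
      by_contra! h'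
      exact hℓ (LinearMap.ext h')
    have : (Fintype.card F : ℝ) = ∑ b : F, 1 := by simp
    rw [hc₀, this]
    refine Finset.sum_lt_sum (fun i _ => by split_ifs <;> norm_num) ⟨b, Finset.mem_univ _, ?_⟩
    rw [if_neg hb]; norm_num
  have key : ∀ x, ∑ b : F, levelSum ℓ b φ (ℓ (b * x)) =
      (Fintype.card F - c₀) * φ x + c₀ * ∑ g, φ g := by
    intro x
    simp only [levelSum]
    rw [Finset.sum_comm]
    have : ∀ g, (∑ b : F, if ℓ (b * g) = ℓ (b * x) then φ g else 0) =
        (if g = x then (Fintype.card F - c₀) * φ g else 0) + c₀ * φ g := by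
      intro g
      by_cases hg : g = x
      · subst hg; simp; ring
      · rw [if_neg hg, zero_add, hc₀, Finset.sum_mul]
        refine Fintype.sum_equiv (Equiv.mulRight₀ (g - x) (sub_ne_zero.2 hg)) _ _ fun b => ?_
        simp only [Equiv.mulRight₀_apply, mul_sub, map_sub, sub_eq_zero]
        split_ifs <;> simp
    rw [Finset.sum_congr rfl fun g _ => this g, Finset.sum_add_distrib, Finset.mul_sum]
    simp
  have hxy : ∑ b : F, levelSum ℓ b φ (ℓ (b * x)) = ∑ b : F, levelSum ℓ b φ (ℓ (b * y)) := by
    refine Finset.sum_congr rfl fun b _ => ?_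
    by_cases hb : b = 0
    · simp [hb]
    · exact h b hb _ _
  rw [key, key] at hxy
  have : (Fintype.card F - c₀) ≠ 0 := by linarith
  exact mul_left_cancel₀ this (by linarith)

lemma levelSum_smul (ℓ : F →ₗ[ZMod p] ZMod p) {a : ZMod p} (ha : IsUnit a) (b : F) (φ : F → ℝ)
    (c : ZMod p) : levelSum ℓ (a • b) φ (a * c) = levelSum ℓ b φ c := by
  simp only [levelSum, smul_mul_assoc, map_smul, smul_eq_mul]
  refine Finset.sum_congr rfl fun g _ => ?_
  simp only [ha.mul_right_inj]

lemma levelSum_shift (ℓ : F →ₗ[ZMod p] ZMod p) (b : F) (φ ψ : F → ℝ) (g : F)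
    (h : ∀ i, ψ i = φ (i - g)) (c : ZMod p) :
    levelSum ℓ b ψ c = levelSum ℓ b φ (c - ℓ (b * g)) := by
  simp only [levelSum, h]
  refine Fintype.sum_equiv (Equiv.subRight g) _ _ fun i => ?_
  simp only [Equiv.subRight_apply, mul_sub, map_sub, sub_left_inj]

/-- Every value on `S` exceeds every value off `S`. -/
def Upper (u : ZMod p → ℝ) (S : Finset (ZMod p)) : Prop := ∀ c ∈ S, ∀ c' ∉ S, u c' < u c

omit hp in
lemma Upper.unique {u : ZMod p → ℝ} {S S' : Finset (ZMod p)} (h : Upper u S) (h' : Upper u S')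
    (hc : S.card = S'.card) : S = S' := by
  by_contra hne
  have h1 : ¬ S ⊆ S' := fun hs => hne (Finset.eq_of_subset_of_card_le hs hc.ge)
  have h2 : ¬ S' ⊆ S := fun hs => hne (Finset.eq_of_subset_of_card_le hs hc.le).symm
  obtain ⟨a, ha, ha'⟩ := Finset.not_subset.1 h1
  obtain ⟨b, hb, hb'⟩ := Finset.not_subset.1 h2
  exact lt_asymm (h a ha b hb') (h' b hb a ha')

lemma exists_upper {u : ZMod p → ℝ} (h : ∃ c c', u c ≠ u c') :
    ∃ S, Upper u S ∧ 0 < S.card ∧ S.card < p := by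
  classical
  obtain ⟨m, -, hm⟩ := Finset.exists_max_image Finset.univ u Finset.univ_nonempty
  refine ⟨Finset.univ.filter fun c => u c = u m, ?_, ?_, ?_⟩
  · intro c hc c' hc'
    simp only [Finset.mem_filter, Finset.mem_univ, true_and] at hc hc'
    rw [hc]
    exact lt_of_le_of_ne (hm c' (Finset.mem_univ _)) hc'
  · exact Finset.card_pos.2 ⟨m, by simp⟩
  · obtain ⟨c, c', hcc⟩ := h
    have : (Finset.univ.filter fun c => u c = u m) ⊂ Finset.univ := by
      rw [Finset.filter_ssubset]
      by_contra! h
      exact hcc ((h c (Finset.mem_univ _)).trans (h c' (Finset.mem_univ _)).symm)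
    simpa [ZMod.card] using Finset.card_lt_card this

/-- The mean of a subset of `ZMod p`. -/
def mean (S : Finset (ZMod p)) : ZMod p := (S.card : ZMod p)⁻¹ * ∑ c ∈ S, c

lemma mean_map (S : Finset (ZMod p)) (h0 : 0 < S.card) (h1 : S.card < p) (a : ZMod p) :
    mean (S.map (Equiv.addRight a).toEmbedding) = mean S + a := by
  have h : (S.card : ZMod p) ≠ 0 := by
    rw [Ne, ZMod.natCast_eq_zero_iff]
    exact Nat.not_dvd_of_pos_of_lt h0 h1
  simp only [mean, Finset.card_map, Finset.sum_map, Equiv.coe_toEmbedding, Equiv.coe_addRight,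
    Finset.sum_add_distrib, Finset.sum_const, nsmul_eq_mul, mul_add]
  rw [inv_mul_cancel_left₀ h]

end Fourier
end RainbowTverberg

namespace RainbowTverberg
open Finsupp

/-! ### A Borsuk–Ulam theorem for the additive group of a finite field -/

section BorsukUlam

lemma Upper.map_shift {p : ℕ} {u u' : ZMod p → ℝ} {S : Finset (ZMod p)} (h : Upper u S) (a : ZMod p)
    (hu : ∀ c, u' c = u (c - a)) : Upper u' (S.map (Equiv.addRight a).toEmbedding) := by
  intro c hc c' hc'
  simp only [Finset.mem_map_equiv, Equiv.addRight_symm, Equiv.coe_addRight] at hc hc'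
  rw [hu, hu, sub_eq_add_neg, sub_eq_add_neg]
  exact h _ hc _ hc'

/-- Equivariant maps from a highly acyclic free complex to a sum of `2 e` copies of the
regular representation hit the diagonal subspace. -/
theorem exists_const_point (p : ℕ) [hp : Fact p.Prime] {F : Type*} [Field F] [Fintype F]
    [CharP F p] [Algebra (ZMod p) F] {V : Type*} [Fintype V] [Nonempty V] [AddAction F V]
    {R : V → V → Prop} [hR : Fact (EqRel F R)] {E : Type*} [Fintype E]
    (hac : ∀ k ≤ 2 * (Fintype.card E * (Fintype.card F - 1)), Acyc F R Set.univ k)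
    (Φ : E × Bool → Geo R → F → ℝ) (hΦ : ∀ j i, Continuous fun x => Φ j x i)
    (hΦG : ∀ j (g : F) x i, Φ j (g +ᵥ x) i = Φ j x (i - g)) :
    ∃ x, ∀ j i i', Φ j x i = Φ j x i' := by
  classical
  by_contra hcon
  push Not at hcon
  obtain ⟨ℓ, hℓ⟩ : ∃ ℓ : F →ₗ[ZMod p] ZMod p, ℓ ≠ 0 := by
    by_contra! h
    have := (Module.finBasis (ZMod p) F).ext_elem (x := 1) (y := 0) fun i => by
      have := congrArg (fun f => f (1 : F)) (h ((Module.finBasis (ZMod p) F).coord i))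
      simpa using this
    exact one_ne_zero this
  -- a type records a functional up to scaling, a component up to the `Bool`, and the size of an
  -- upper set of level sums; the `Bool` becomes the parity of `κ`, so each type serves two labels
  let P := Projectivization (ZMod p) F
  let Tr := P × E × Fin (p - 1)
  have : Finite P := Quotient.finite _
  have : Fintype P := Fintype.ofFinite P
  have hcard : Fintype.card Tr = Fintype.card E * (Fintype.card F - 1) := by
    have h1 := Projectivization.card (ZMod p) F
    simp only [Nat.card_eq_fintype_card, ZMod.card] at h1
    rw [h1]
    simp only [Tr, Fintype.card_prod, Fintype.card_fin]
    ring
  set n := Fintype.card E * (Fintype.card F - 1) with hn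
  let τ : Tr ≃ Fin n := Fintype.equivFinOfCardEq hcard
  have hbase : ∀ x : Geo R, ∃ (b : P) (j : E × Bool) (S : Finset (ZMod p)),
      Upper (levelSum ℓ b.rep (Φ j x)) S ∧ 0 < S.card ∧ S.card < p := by
    intro x
    obtain ⟨j, i, i', hii⟩ := hcon x
    obtain ⟨b, hb, c, c', hcc⟩ : ∃ b ≠ 0, ∃ c c', levelSum ℓ b (Φ j x) c ≠
        levelSum ℓ b (Φ j x) c' := by
      by_contra! h
      exact hii (const_of_levelSum hℓ _ h i i')
    obtain ⟨a, ha⟩ := Projectivization.exists_smul_eq_mk_rep (ZMod p) b hb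
    obtain ⟨S, hS⟩ := exists_upper (u := levelSum ℓ (Projectivization.mk (ZMod p) b hb).rep (Φ j x))
      ⟨a * c, a * c', by
        rw [← ha, Units.smul_def, levelSum_smul ℓ a.isUnit, levelSum_smul ℓ a.isUnit]
        exact hcc⟩
    exact ⟨_, j, S, hS⟩
  let Ix := {q : P × (E × Bool) × Finset (ZMod p) // 0 < q.2.2.card ∧ q.2.2.card < p}
  let U : Ix → Set (Geo R) := fun q =>
    {x | Upper (levelSum ℓ q.1.1.rep (Φ q.1.2.1 x)) q.1.2.2}
  have hUo : ∀ q, IsOpen (U q) := by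
    intro q
    have : U q = ⋂ c : ZMod p, ⋂ _ : c ∈ q.1.2.2, ⋂ c' : ZMod p, ⋂ _ : c' ∉ q.1.2.2,
        {x | levelSum ℓ q.1.1.rep (Φ q.1.2.1 x) c' < levelSum ℓ q.1.1.rep (Φ q.1.2.1 x) c} := by
      ext x; simp [U, Upper]
    have hcont : ∀ c, Continuous fun x => levelSum ℓ q.1.1.rep (Φ q.1.2.1 x) c := by
      intro c
      refine continuous_finsetSum _ fun i _ => ?_
      by_cases h : ℓ (q.1.1.rep * i) = c
      · simpa [h] using hΦ _ i
      · simpa [h] using continuous_const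
    rw [this]
    exact isOpen_iInter_of_finite fun c => isOpen_iInter_of_finite fun _ =>
      isOpen_iInter_of_finite fun c' => isOpen_iInter_of_finite fun _ =>
        isOpen_lt (hcont _) (hcont _)
  obtain ⟨ε, hε, hleb⟩ := lebesgue_number_lemma_of_metric (isCompact_univ (X := Geo R)) hUo
    (fun x _ => by
      obtain ⟨b, j, S, h1, h2⟩ := hbase x
      exact Set.mem_iUnion.2 ⟨⟨(b, j, S), h2⟩, h1⟩)
  choose q hq using fun x => hleb x (Set.mem_univ x)
  -- make the choice of type equivariant
  obtain ⟨rep, γ, hγ, hrep⟩ := exists_orbit_rep (G := F) (R := R)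
  let b : Geo R → P := fun x => (q (rep x)).1.1
  let j : Geo R → E × Bool := fun x => (q (rep x)).1.2.1
  let S : Geo R → Finset (ZMod p) := fun x => (q (rep x)).1.2.2.map
    (Equiv.addRight (ℓ ((b x).rep * γ x))).toEmbedding
  have hS0 : ∀ x, 0 < (S x).card := fun x => by
    simpa only [S, Finset.card_map] using (q (rep x)).2.1
  have hSp : ∀ x, (S x).card < p := fun x => by
    simpa only [S, Finset.card_map] using (q (rep x)).2.2
  have hup : ∀ x y, dist y x < ε → Upper (levelSum ℓ (b x).rep (Φ (j x) y)) (S x) := by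
    intro x y hxy
    have h1 : (-γ x +ᵥ y) ∈ Metric.ball (rep x) ε := by
      rw [Metric.mem_ball]
      have h := geo_dist_vadd (γ x) (-γ x +ᵥ y) (rep x)
      rw [hγ, vadd_neg_vadd] at h
      rwa [← h]
    refine Upper.map_shift (hq (rep x) h1) _ fun c => ?_
    refine levelSum_shift ℓ _ _ _ _ (fun i => ?_) c
    rw [← hΦG, vadd_neg_vadd]
  have hbG : ∀ (g : F) x, b (g +ᵥ x) = b x := fun g x => by simp only [b, (hrep g x).1]
  have hjG : ∀ (g : F) x, j (g +ᵥ x) = j x := fun g x => by simp only [j, (hrep g x).1]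
  have hSG : ∀ (g : F) x, S (g +ᵥ x) =
      (S x).map (Equiv.addRight (ℓ ((b x).rep * g))).toEmbedding := by
    intro g x
    simp only [S, hbG, (hrep g x).1, (hrep g x).2, Finset.map_map]
    congr 1
    ext c
    simp only [Equiv.coe_toEmbedding, Equiv.coe_addRight, Function.Embedding.trans_apply, mul_add,
      map_add]
    ring
  let tr : Geo R → Tr := fun x =>
    (b x, (j x).1, ⟨(S x).card - 1, by have := hS0 x; have := hSp x; omega⟩)
  have htrG : ∀ (g : F) x, tr (g +ᵥ x) = tr x := fun g x => by
    simp only [tr, hbG, hjG, hSG, Finset.card_map]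
  let κ : Geo R → ℕ := fun x => 2 * (τ (tr x) : ℕ) + if (j x).2 then 1 else 0
  have hκ2 : ∀ x, κ x / 2 = τ (tr x) := fun x => by
    simp only [κ]; split_ifs <;> omega
  have hκG : ∀ (g : F) x, κ (g +ᵥ x) = κ x := fun g x => by simp only [κ, htrG, hjG]
  let bt : ℕ → F := fun t => if h : t < n then (τ.symm ⟨t, h⟩).1.rep else 0
  have hbt : ∀ x, bt (κ x / 2) = (b x).rep := by
    intro x
    have h : κ x / 2 < n := by rw [hκ2]; exact (τ (tr x)).2
    simp only [bt, dif_pos h]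
    have : (⟨κ x / 2, h⟩ : Fin n) = τ (tr x) := Fin.ext (hκ2 x)
    rw [this, Equiv.symm_apply_apply]
  let hm : ℕ → F →+ ZMod p := fun t => ℓ.toAddMonoidHom.comp (AddMonoidHom.mulLeft (bt t))
  -- off the points of type `t`, any equivariant value will do
  let lam : ℕ → Geo R → ZMod p := fun t x => if κ x / 2 = t then mean (S x) else ℓ (bt t * γ x)
  refine no_labelling (ξ := Module.finBasis (ZMod p) F) (g := Module.finBasis (ZMod p) F)
    (fun i => by simp) n hac κ (fun x => ?_) hκG lam hm ?_ ?_ hε ?_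
  · have := (τ (tr x)).2
    simp only [κ]; split_ifs <;> omega
  · intro t _ g x
    simp only [lam, hκG, hm]
    split_ifs with h
    · rw [hSG, mean_map _ (hS0 x) (hSp x)]
      subst h
      simp [hbt]
    · rw [(hrep g x).2, mul_add, map_add, add_comm]
      rfl
  · intro t ht h0
    have hb0 : bt t ≠ 0 := by
      simp only [bt, dif_pos ht]; exact Projectivization.rep_nonzero _
    have h1 : ∑ i, hm t (Module.finBasis (ZMod p) F i) • Module.finBasis (ZMod p) F i = 0 := by
      rw [← h0]
      refine Finset.sum_congr rfl fun i _ => ?_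
      rw [Algebra.smul_def, mul_comm, ← map_natCast (algebraMap (ZMod p) F), ZMod.natCast_zmod_val]
    have h2 := Fintype.linearIndependent_iff.1 (Module.finBasis (ZMod p) F).linearIndependent _ h1
    have h3 : ℓ.comp (LinearMap.mulLeft (ZMod p) (bt t)) = 0 :=
      (Module.finBasis (ZMod p) F).ext fun i => h2 i
    refine hℓ (LinearMap.ext fun y => ?_)
    have := LinearMap.congr_fun h3 ((bt t)⁻¹ * y)
    simpa [mul_inv_cancel_left₀ hb0] using this
  · intro x y hxy hk
    have h2 : τ (tr x) = τ (tr y) := Fin.ext (by rw [← hκ2, ← hκ2, hk])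
    have htr := τ.injective h2
    have hb : b x = b y := congrArg (fun a : Tr => a.1) htr
    have hj1 : (j x).1 = (j y).1 := congrArg (fun a : Tr => a.2.1) htr
    have hc : (S x).card = (S y).card := by
      have : (S x).card - 1 = (S y).card - 1 := congrArg (fun a : Tr => (a.2.2 : ℕ)) htr
      have := hS0 x; have := hS0 y; omega
    have hj2 : (j x).2 = (j y).2 := by
      simp only [κ, h2] at hk
      cases h : (j x).2 <;> cases h' : (j y).2 <;> simp [h, h'] at hk <;> rfl
    have hj : j x = j y := Prod.ext hj1 hj2
    have u1 := hup x x (by simpa using hε)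
    have u2 := hup y x hxy
    rw [← hb, ← hj] at u2
    have := u1.unique u2 hc
    simp only [lam, hk, if_true, this]

end BorsukUlam
end RainbowTverberg

namespace RainbowTverberg

/-! ### Hall deficiency and the minimal set of largest deficiency -/

section Hall

variable {ι κ : Type*} [DecidableEq ι] [DecidableEq κ]

/-- The Hall deficiency of a set of indices with respect to the neighbourhoods `nb`. -/
def deficit (nb : ι → Finset κ) (X : Finset ι) : ℤ := X.card - (X.biUnion nb).card

lemma deficit_supermodular (nb : ι → Finset κ) (X Y : Finset ι) :
    deficit nb X + deficit nb Y ≤ deficit nb (X ∪ Y) + deficit nb (X ∩ Y) := by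
  have h1 := Finset.card_union_add_card_inter X Y
  have h2 := Finset.card_union_add_card_inter (X.biUnion nb) (Y.biUnion nb)
  have h3 : (X ∩ Y).biUnion nb ⊆ X.biUnion nb ∩ Y.biUnion nb := by
    intro a
    simp only [Finset.mem_biUnion, Finset.mem_inter]
    rintro ⟨i, ⟨h, h'⟩, ha⟩
    exact ⟨⟨i, h, ha⟩, i, h', ha⟩
  have h4 := Finset.card_le_card h3
  simp only [deficit, Finset.union_biUnion]
  omega

/-- `M` is the smallest among the subsets of `A` of largest deficiency. -/
def IsMinMax (nb : ι → Finset κ) (A M : Finset ι) : Prop :=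
  M ⊆ A ∧ (∀ X ⊆ A, deficit nb X ≤ deficit nb M) ∧
    ∀ X ⊆ A, deficit nb M ≤ deficit nb X → M ⊆ X

lemma exists_isMinMax (nb : ι → Finset κ) (A : Finset ι) : ∃ M, IsMinMax nb A M := by
  obtain ⟨M₀, hM₀, hmax⟩ := Finset.exists_max_image A.powerset (deficit nb) ⟨∅, by simp⟩
  obtain ⟨M, hM, hmin⟩ := Finset.exists_min_image
    (A.powerset.filter fun M => deficit nb M₀ ≤ deficit nb M) Finset.card
    ⟨M₀, Finset.mem_filter.2 ⟨hM₀, le_rfl⟩⟩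
  rw [Finset.mem_filter, Finset.mem_powerset] at hM
  refine ⟨M, hM.1, fun X hX => (hmax X (Finset.mem_powerset.2 hX)).trans hM.2, fun X hX h => ?_⟩
  have h1 := deficit_supermodular nb M X
  have h2 := hmax (M ∪ X) (Finset.mem_powerset.2 (Finset.union_subset hM.1 hX))
  have h3 := hmin (M ∩ X) (Finset.mem_filter.2
    ⟨Finset.mem_powerset.2 (Finset.inter_subset_left.trans hM.1), by omega⟩)
  exact Finset.inter_eq_left.1 (Finset.eq_of_subset_of_card_le Finset.inter_subset_left h3)

omit [DecidableEq ι] in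
lemma deficit_congr {nb nb' : ι → Finset κ} {X : Finset ι} (h : ∀ i ∈ X, nb i = nb' i) :
    deficit nb X = deficit nb' X := by
  rw [deficit, deficit, Finset.biUnion_congr rfl h]

omit [DecidableEq ι] in
lemma IsMinMax.congr {nb nb' : ι → Finset κ} {A M : Finset ι} (h : ∀ i ∈ A, nb i = nb' i)
    (hM : IsMinMax nb A M) : IsMinMax nb' A M := by
  have key : ∀ X ⊆ A, deficit nb X = deficit nb' X := fun X hX =>
    deficit_congr fun i hi => h i (hX hi)
  refine ⟨hM.1, fun X hX => ?_, fun X hX => ?_⟩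
  · rw [← key X hX, ← key M hM.1]; exact hM.2.1 X hX
  · rw [← key X hX, ← key M hM.1]; exact hM.2.2 X hX

/-- Along an increasing family of sets, the smallest set of largest deficiency is determined by
its deficiency. -/
lemma IsMinMax.eq_of_deficit {nb : ι → Finset κ} {A A' M M' : Finset ι} (hA : A ⊆ A')
    (hM : IsMinMax nb A M) (hM' : IsMinMax nb A' M') (h : deficit nb M = deficit nb M') :
    M = M' := by
  refine Finset.Subset.antisymm ?_ (hM'.2.2 M (hM.1.trans hA) h.ge)
  have h1 := deficit_supermodular nb M M'
  have h2 := hM'.2.1 (M ∪ M') (Finset.union_subset (hM.1.trans hA) hM'.1)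
  exact (hM.2.2 (M ∩ M') (Finset.inter_subset_left.trans hM.1) (by omega)).trans
    Finset.inter_subset_right

lemma deficit_comp {ι' : Type*} [DecidableEq ι'] (e : ι' ≃ ι) (nb : ι → Finset κ)
    (X : Finset ι') : deficit (nb ∘ e) X = deficit nb (X.map e.toEmbedding) := by
  rw [deficit, deficit, Finset.card_map, Finset.map_eq_image, Finset.image_biUnion]
  rfl

lemma IsMinMax.comp {ι' : Type*} [DecidableEq ι'] (e : ι' ≃ ι) {nb : ι → Finset κ}
    {A M : Finset ι} (hM : IsMinMax nb A M) :
    IsMinMax (nb ∘ e) (A.map e.symm.toEmbedding) (M.map e.symm.toEmbedding) := by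
  have hee : ∀ X : Finset ι, (X.map e.symm.toEmbedding).map e.toEmbedding = X := by
    intro X; ext; simp
  have hs : ∀ X, X ⊆ A.map e.symm.toEmbedding → X.map e.toEmbedding ⊆ A := by
    intro X hX
    rw [← hee A]; exact Finset.map_subset_map.2 hX
  refine ⟨Finset.map_subset_map.2 hM.1, fun X hX => ?_, fun X hX h => ?_⟩
  · rw [deficit_comp, deficit_comp, hee]; exact hM.2.1 _ (hs X hX)
  · rw [deficit_comp, deficit_comp, hee] at h
    have := hM.2.2 _ (hs X hX) h
    rw [← hee M] at this
    exact Finset.map_subset_map.1 this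

end Hall

/-! ### Obstructed configurations -/

section Config

variable {G : Type*} [Fintype G] [DecidableEq G] {m k r : ℕ}

open Classical in
/-- The indices `j` for which `B` is a face of `K j`. -/
noncomputable def faceIdx (K : Fin r → Set (Finset (Fin m))) (B : Finset (Fin m)) : Finset (Fin r) :=
  Finset.univ.filter fun j => B ∈ K j

/-- The blocks of a configuration that have the largest possible size. -/
def full (k : ℕ) (σ : G → Finset (Fin m)) : Finset G := Finset.univ.filter fun i => (σ i).card = k + 1

/-- The configuration `σ` violates Hall's condition for the assignment of its blocks to the
complexes `K j`, and among the blocks of the smallest set of full blocks of largest deficiency,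
the block `σ i` contains the smallest vertex. -/
def Obstructed (k : ℕ) (K : Fin r → Set (Finset (Fin m))) (σ : G → Finset (Fin m)) (i : G) : Prop :=
  ∃ M, IsMinMax (fun i => faceIdx K (σ i)) (full k σ) M ∧
    0 < deficit (fun i => faceIdx K (σ i)) M ∧ i ∈ M ∧ ∀ i' ∈ M, (σ i).min ≤ (σ i').min

lemma Obstructed.comp {K : Fin r → Set (Finset (Fin m))} {σ : G → Finset (Fin m)} {i : G}
    (e : G ≃ G) (h : Obstructed k K σ (e i)) : Obstructed k K (σ ∘ e) i := by
  obtain ⟨M, h1, h2, h3, h4⟩ := h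
  refine ⟨M.map e.symm.toEmbedding, ?_, ?_, ?_, ?_⟩
  · have : full k (σ ∘ e) = (full k σ).map e.symm.toEmbedding := by
      ext; simp [full]
    rw [this]
    exact h1.comp e
  · rw [show (fun i => faceIdx K ((σ ∘ e) i)) = (fun i => faceIdx K (σ i)) ∘ e from rfl,
      deficit_comp]
    have : (M.map e.symm.toEmbedding).map e.toEmbedding = M := by ext; simp
    rwa [this]
  · simpa using h3
  · intro i' hi'
    simp only [Finset.mem_map_equiv, Equiv.symm_symm] at hi'
    exact h4 _ hi'

lemma obstructed_comp_iff {K : Fin r → Set (Finset (Fin m))} {σ : G → Finset (Fin m)} {i : G}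
    (e : G ≃ G) : Obstructed k K (σ ∘ e) i ↔ Obstructed k K σ (e i) := by
  refine ⟨fun h => ?_, Obstructed.comp e⟩
  have := Obstructed.comp (σ := σ ∘ e) (i := e i) e.symm (by simpa using h)
  simpa [Function.comp_assoc] using this

/-- Pairwise disjoint rainbow blocks. -/
def RainbowConfig (c : Fin m → Fin (k + 1)) (σ : G → Finset (Fin m)) : Prop :=
  (∀ i j, i ≠ j → Disjoint (σ i) (σ j)) ∧ ∀ i, Set.InjOn c (σ i)

variable {c : Fin m → Fin (k + 1)} {K : Fin r → Set (Finset (Fin m))}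

omit [Fintype G] [DecidableEq G] in
lemma RainbowConfig.card_le {σ : G → Finset (Fin m)} (h : RainbowConfig c σ) (i : G) :
    (σ i).card ≤ k + 1 := by
  simpa using Finset.card_le_card_of_injOn c (fun a _ => Finset.mem_univ (c a)) (h.2 i)

omit [DecidableEq G] in
lemma mem_full_of_le {σ σ' : G → Finset (Fin m)} (h' : RainbowConfig c σ') (hle : ∀ i, σ i ⊆ σ' i)
    {i : G} (hi : i ∈ full k σ) : σ i = σ' i := by
  simp only [full, Finset.mem_filter, Finset.mem_univ, true_and] at hi
  exact Finset.eq_of_subset_of_card_le (hle i) (by have := h'.card_le i; omega)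

/-- Two nested configurations with the same largest deficiency have the same distinguished block:
full blocks of the smaller one are blocks of the larger one. -/
lemma obstructed_unique {σ σ' : G → Finset (Fin m)} (h' : RainbowConfig c σ')
    (hle : ∀ i, σ i ⊆ σ' i) {i i' : G} {M M' : Finset G}
    (hM : IsMinMax (fun i => faceIdx K (σ i)) (full k σ) M)
    (hM' : IsMinMax (fun i => faceIdx K (σ' i)) (full k σ') M')
    (hi : i ∈ M) (hi' : i' ∈ M') (hmin : ∀ a ∈ M, (σ i).min ≤ (σ a).min)
    (hmin' : ∀ a ∈ M', (σ' i').min ≤ (σ' a).min)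
    (hd : deficit (fun i => faceIdx K (σ i)) M = deficit (fun i => faceIdx K (σ' i)) M') :
    i = i' := by
  have hcongr : ∀ a ∈ full k σ, faceIdx K (σ a) = faceIdx K (σ' a) := fun a ha => by
    rw [mem_full_of_le h' hle ha]
  have hsub : full k σ ⊆ full k σ' := by
    intro a ha
    have := mem_full_of_le h' hle ha
    simp only [full, Finset.mem_filter, Finset.mem_univ, true_and] at ha ⊢
    rwa [← this]
  rw [deficit_congr fun a ha => hcongr a (hM.1 ha)] at hd
  obtain rfl := (hM.congr hcongr).eq_of_deficit hsub hM' hd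
  have e1 := mem_full_of_le h' hle (hM.1 hi)
  have e2 := mem_full_of_le h' hle (hM.1 hi')
  have hle1 := hmin i' hi'
  have hle2 := hmin' i hi
  rw [e1, e2] at hle1
  have heq := le_antisymm hle1 hle2
  by_contra hne
  have hcard := hM'.1 hi
  simp only [full, Finset.mem_filter, Finset.mem_univ, true_and] at hcard
  obtain ⟨v, hv⟩ := Finset.min_of_nonempty (Finset.card_pos.1 (by omega : 0 < (σ' i).card))
  exact Finset.disjoint_left.1 (h'.1 i i' hne) (Finset.mem_of_min hv)
    (Finset.mem_of_min (heq ▸ hv))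

/-- Unavoidability bounds all Hall deficiencies: otherwise `r - s + 1` blocks could be placed at
indices outside their common neighbourhood, and too few of the blocks would be faces. -/
lemma deficit_le {s : ℕ} (hG : Fintype.card G = r) (hsr : s ≤ r)
    (hunav : ∀ A : Fin r → Finset (Fin m), (∀ i j, i ≠ j → Disjoint (A i) (A j)) →
      (∀ i, Set.InjOn c (A i)) → ∃ I : Finset (Fin r), I.card = s ∧ ∀ i ∈ I, A i ∈ K i)
    {σ : G → Finset (Fin m)} (hσ : RainbowConfig c σ) (X : Finset G) :
    deficit (fun i => faceIdx K (σ i)) X ≤ (r - s : ℕ) := by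
  classical
  by_contra! hlt
  set N := X.biUnion (fun i => faceIdx K (σ i)) with hN
  have hX : (X.card : ℤ) - N.card > (r - s : ℕ) := hlt
  have hXr : X.card ≤ r := hG ▸ X.card_le_univ
  obtain ⟨T, hTX, hT⟩ := Finset.exists_subset_card_eq (s := X) (n := r - s + 1) (by omega)
  obtain ⟨T', hTN, hT'⟩ := Finset.exists_subset_card_eq (s := Nᶜ) (n := r - s + 1) (by
    rw [Finset.card_compl, Fintype.card_fin]; omega)
  have e := Finset.equivOfCardEq (hT.trans hT'.symm)
  have : Nonempty (Fin r) := ⟨(e.symm.symm ⟨_, (Finset.card_pos.1 (by omega : 0 < T.card)).choose_spec⟩).1⟩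
  let f : G → Fin r := fun i => if h : i ∈ T then (e ⟨i, h⟩).1 else Classical.arbitrary _
  have hf : ∀ i (h : i ∈ T), f i = (e ⟨i, h⟩).1 := fun i h => dif_pos h
  obtain ⟨g, hg⟩ := Finset.exists_equiv_extend_of_card_eq (t := (Finset.univ : Finset (Fin r)))
    (by simpa using hG) (s := T) (f := f) (Finset.subset_univ _) (by
      intro a ha b hb hab
      rw [hf a ha, hf b hb] at hab
      exact congrArg Subtype.val (e.injective (Subtype.ext hab)))
  let π : G → Fin r := fun i => (g i).1
  have hπ : Function.Bijective π := by
    rw [Fintype.bijective_iff_injective_and_card]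
    exact ⟨fun a b hab => g.injective (Subtype.ext hab), by simpa using hG⟩
  let π' := Equiv.ofBijective π hπ
  obtain ⟨I, hI, hIK⟩ := hunav (fun j => σ (π'.symm j))
    (fun i j hij => hσ.1 _ _ fun h => hij (π'.symm.injective h)) (fun i => hσ.2 _)
  have hdisj : Disjoint I T' := by
    rw [Finset.disjoint_left]
    intro j hj hj'
    set i := (e.symm ⟨j, hj'⟩).1
    have hiT : i ∈ T := (e.symm ⟨j, hj'⟩).2
    have hij : π' i = j := by
      change (g i).1 = j
      rw [hg i hiT, hf i hiT]
      simp [i]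
    have h1 := hIK j hj
    rw [← hij] at h1
    simp only [Equiv.symm_apply_apply] at h1
    have h2 := hTN hj'
    rw [Finset.mem_compl, hN, Finset.mem_biUnion] at h2
    refine h2 ⟨i, hTX hiT, ?_⟩
    simp only [faceIdx, Finset.mem_filter, Finset.mem_univ, true_and]
    rwa [hij] at h1
  have h1 := Finset.card_union_of_disjoint hdisj
  have h2 := (I ∪ T').card_le_univ
  rw [Fintype.card_fin] at h2
  omega

/-- At most `r - s` blocks are distinguished along a chain of configurations, since the deficiency
of a distinguished block determines it and lies between `1` and `r - s`. -/
lemma card_obstructed_le {s : ℕ} (hG : Fintype.card G = r) (hsr : s ≤ r)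
    (hunav : ∀ A : Fin r → Finset (Fin m), (∀ i j, i ≠ j → Disjoint (A i) (A j)) →
      (∀ i, Set.InjOn c (A i)) → ∃ I : Finset (Fin r), I.card = s ∧ ∀ i ∈ I, A i ∈ K i)
    {T : Type*} [Nonempty T] (σ : T → G → Finset (Fin m)) (hσ : ∀ t, RainbowConfig c (σ t))
    (hchain : ∀ t t', (∀ i, σ t i ⊆ σ t' i) ∨ ∀ i, σ t' i ⊆ σ t i)
    (W : Finset G) (hW : ∀ i ∈ W, ∃ t, Obstructed k K (σ t) i) : W.card ≤ r - s := by
  choose! t ht using hW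
  have ht' : ∀ i, ∃ M, i ∈ W → IsMinMax (fun a => faceIdx K (σ (t i) a)) (full k (σ (t i))) M ∧
      0 < deficit (fun a => faceIdx K (σ (t i) a)) M ∧ i ∈ M ∧
        ∀ a ∈ M, (σ (t i) i).min ≤ (σ (t i) a).min := by
    intro i
    by_cases hi : i ∈ W
    · obtain ⟨M, hM⟩ := ht i hi
      exact ⟨M, fun _ => hM⟩
    · exact ⟨∅, fun h => absurd h hi⟩
  choose M hM using ht'
  have hcard : (Finset.Icc (1 : ℤ) (r - s : ℕ)).card = r - s := by simp
  rw [← hcard]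
  refine Finset.card_le_card_of_injOn
    (fun i => deficit (fun a => faceIdx K (σ (t i) a)) (M i)) ?_ ?_
  · intro i hi
    rw [Finset.mem_coe, Finset.mem_Icc]
    have := (hM i hi).2.1
    exact ⟨Order.one_le_iff_pos.2 this, deficit_le hG hsr hunav (hσ _) _⟩
  · intro i hi i' hi' h
    obtain ⟨a1, -, a2, a3⟩ := hM i hi
    obtain ⟨b1, -, b2, b3⟩ := hM i' hi'
    rcases hchain (t i) (t i') with hle | hle
    · exact obstructed_unique (hσ _) hle a1 b1 a2 b2 a3 b3 h
    · exact (obstructed_unique (hσ _) hle b1 a1 b2 a2 b3 a3 h.symm).symm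

/-- If no block is distinguished, Hall's theorem assigns the blocks to the complexes. -/
lemma exists_assignment (hG : Fintype.card G = r)
    (hbal : ∀ j (A : Finset (Fin m)), Set.InjOn c A → A.card ≤ k → A ∈ K j)
    {σ : G → Finset (Fin m)} (hσ : RainbowConfig c σ) (hno : ∀ i, ¬ Obstructed k K σ i) :
    ∃ π : G ≃ Fin r, ∀ i, σ i ∈ K (π i) := by
  classical
  obtain ⟨M, hM⟩ := exists_isMinMax (fun i => faceIdx K (σ i)) (full k σ)
  have h0 : deficit (fun i => faceIdx K (σ i)) M ≤ 0 := by
    by_contra! h0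
    have hne : M.Nonempty := by
      rw [Finset.nonempty_iff_ne_empty]
      rintro rfl
      simp [deficit] at h0
    obtain ⟨i, hi, hmin⟩ := Finset.exists_min_image M (fun i => (σ i).min) hne
    exact hno i ⟨M, hM, h0, hi, hmin⟩
  have hhall : ∀ X : Finset G, X.card ≤ (X.biUnion fun i => faceIdx K (σ i)).card := by
    intro X
    by_cases hX : X ⊆ full k σ
    · have := (hM.2.1 X hX).trans h0
      simp only [deficit] at this
      omega
    · obtain ⟨i, hi, hi'⟩ := Finset.not_subset.1 hX
      have hlt : (σ i).card ≤ k := by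
        have := hσ.card_le i
        simp only [full, Finset.mem_filter, Finset.mem_univ, true_and] at hi'
        omega
      have : (X.biUnion fun i => faceIdx K (σ i)) = Finset.univ := by
        refine Finset.eq_univ_of_forall fun j => Finset.mem_biUnion.2 ⟨i, hi, ?_⟩
        simp only [faceIdx, Finset.mem_filter, Finset.mem_univ, true_and]
        exact hbal j _ (hσ.2 i) hlt
      rw [this, Finset.card_univ, Fintype.card_fin, ← hG]
      exact X.card_le_univ
  obtain ⟨π, hπ, hπK⟩ := (Finset.all_card_le_biUnion_card_iff_exists_injective _).1 hhall
  refine ⟨Equiv.ofBijective π ((Fintype.bijective_iff_injective_and_card π).2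
    ⟨hπ, by simpa using hG⟩), fun i => ?_⟩
  have := hπK i
  simpa [faceIdx] using this

end Config
end RainbowTverberg

namespace RainbowTverberg
open MeasureTheory

/-! ### Superlevel sets -/

section Layers

variable {G : Type*} [Finite G] {m : ℕ}

/-- The blocks of vertices at which the weights `y` exceed `t`. -/
noncomputable def layer (y : G → Fin m → ℝ) (t : ℝ) : G → Finset (Fin m) :=
  fun i => Finset.univ.filter fun v => t < y i v

omit [Finite G] in
lemma mem_layer {y : G → Fin m → ℝ} {t : ℝ} {i : G} {v : Fin m} :
    v ∈ layer y t i ↔ t < y i v := by simp [layer]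

open Classical in
/-- The measure of the set of levels `t ∈ (0, 1)` whose superlevel configuration satisfies `Q`. -/
noncomputable def layerMass (Q : (G → Finset (Fin m)) → Prop) (y : G → Fin m → ℝ) : ℝ :=
  ∫ t in Set.Ioo (0 : ℝ) 1, if Q (layer y t) then 1 else 0

lemma measurableSet_layer (Q : (G → Finset (Fin m)) → Prop) (y : G → Fin m → ℝ) :
    MeasurableSet {t | Q (layer y t)} := by
  have : {t | Q (layer y t)} = ⋃ σ : G → Finset (Fin m), ⋃ _ : Q σ, ⋂ i : G, ⋂ v : Fin m,
      {t | t < y i v ↔ v ∈ σ i} := by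
    ext t
    simp only [Set.mem_ofPred_eq, Set.mem_iUnion, Set.mem_iInter, exists_prop]
    constructor
    · exact fun h => ⟨_, h, fun i v => mem_layer.symm⟩
    · rintro ⟨σ, h, h'⟩
      rwa [show layer y t = σ from funext fun i => Finset.ext fun v => mem_layer.trans (h' i v)]
  rw [this]
  refine MeasurableSet.iUnion fun σ => MeasurableSet.iUnion fun _ => MeasurableSet.iInter fun i =>
    MeasurableSet.iInter fun v => ?_
  by_cases h : v ∈ σ i
  · simp only [h, iff_true]
    exact measurableSet_Iio
  · simp only [h, iff_false, not_lt]
    exact measurableSet_Ici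

lemma continuous_layerMass (Q : (G → Finset (Fin m)) → Prop) : Continuous (layerMass Q) := by
  classical
  rw [continuous_iff_continuousAt]
  intro y
  refine continuousAt_of_dominated (bound := fun _ => 1) ?_ ?_ ?_ ?_
  · refine Filter.Eventually.of_forall fun y' => ?_
    exact (Measurable.ite (measurableSet_layer Q y') measurable_const
      measurable_const).aestronglyMeasurable
  · refine Filter.Eventually.of_forall fun y' => Filter.Eventually.of_forall fun t => ?_
    split_ifs <;> simp
  · simp
  · have hfin : (Set.range fun iv : G × Fin m => y iv.1 iv.2).Finite := Set.finite_range _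
    have hae : ∀ᵐ t ∂(volume.restrict (Set.Ioo (0 : ℝ) 1)),
        t ∉ Set.range fun iv : G × Fin m => y iv.1 iv.2 :=
      ae_restrict_of_ae (by
        have := (hfin.countable.ae_notMem volume)
        exact this)
    filter_upwards [hae] with t ht
    have hev : ∀ᶠ y' in nhds y, layer y' t = layer y t := by
      have : ∀ᶠ y' in nhds y, ∀ i v, (t < y' i v ↔ t < y i v) := by
        rw [Filter.eventually_all]
        intro i
        rw [Filter.eventually_all]
        intro v
        have hc : ContinuousAt (fun y' : G → Fin m → ℝ => y' i v) y :=
          ((continuous_apply v).comp (continuous_apply i)).continuousAt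
        have hne : y i v ≠ t := fun h => ht ⟨(i, v), h⟩
        rcases lt_or_gt_of_ne hne with h | h
        · filter_upwards [hc.eventually_lt continuousAt_const h] with y' hy'
          exact ⟨fun h' => absurd h' hy'.not_gt, fun h' => absurd h' h.not_gt⟩
        · filter_upwards [continuousAt_const.eventually_lt hc h] with y' hy'
          exact ⟨fun _ => h, fun _ => hy'⟩
      filter_upwards [this] with y' hy'
      exact funext fun i => Finset.ext fun v => by rw [mem_layer, mem_layer, hy']
    refine ContinuousAt.congr (f := fun _ => if Q (layer y t) then (1 : ℝ) else 0)
      continuousAt_const ?_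
    filter_upwards [hev] with y' hy'
    rw [hy']

omit [Finite G] in
lemma layerMass_nonneg (Q : (G → Finset (Fin m)) → Prop) (y : G → Fin m → ℝ) :
    0 ≤ layerMass Q y := by
  classical
  refine integral_nonneg fun t => ?_
  simp only [Pi.zero_apply]
  split_ifs <;> norm_num

omit [Finite G] in
lemma exists_of_layerMass_ne {Q : (G → Finset (Fin m)) → Prop} {y : G → Fin m → ℝ}
    (h : layerMass Q y ≠ 0) : ∃ t ∈ Set.Ioo (0 : ℝ) 1, Q (layer y t) := by
  classical
  by_contra! h'
  refine h ?_
  rw [layerMass, setIntegral_congr_fun (g := fun _ => (0 : ℝ)) measurableSet_Ioo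
    fun t ht => if_neg (h' t ht)]
  simp

/-- The superlevel configuration at small levels is the support. -/
lemma not_of_layerMass_eq {Q : (G → Finset (Fin m)) → Prop} {y : G → Fin m → ℝ}
    (h : layerMass Q y = 0) : ¬ Q (layer y 0) := by
  classical
  intro hQ
  obtain ⟨δ, hδ0, hδ1, hδ⟩ : ∃ δ : ℝ, 0 < δ ∧ δ ≤ 1 ∧ ∀ i v, 0 < y i v → δ ≤ y i v := by
    have hfin : (Set.range fun iv : G × Fin m => if 0 < y iv.1 iv.2 then y iv.1 iv.2 else 1).Finite :=
      Set.finite_range _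
    have : ∃ δ : ℝ, 0 < δ ∧ ∀ z ∈ (Set.range fun iv : G × Fin m =>
        if 0 < y iv.1 iv.2 then y iv.1 iv.2 else 1), δ ≤ z := by
      by_cases hne : (Set.range fun iv : G × Fin m =>
        if 0 < y iv.1 iv.2 then y iv.1 iv.2 else 1).Nonempty
      · obtain ⟨z, ⟨iv, rfl⟩, hz⟩ := Set.exists_min_image _ id hfin hne
        refine ⟨_, ?_, fun w hw => hz w hw⟩
        simp only [id]
        split_ifs with h
        exacts [h, one_pos]
      · exact ⟨1, one_pos, fun z hz => absurd ⟨z, hz⟩ hne⟩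
    obtain ⟨δ, h0, h1⟩ := this
    refine ⟨min δ 1, lt_min h0 one_pos, min_le_right _ _, fun i v hv => (min_le_left _ _).trans ?_⟩
    simpa [hv] using h1 _ ⟨(i, v), rfl⟩
  have hlay : ∀ t ∈ Set.Ioo 0 δ, layer y t = layer y 0 := by
    intro t ht
    refine funext fun i => Finset.ext fun v => ?_
    rw [mem_layer, mem_layer]
    exact ⟨fun h => ht.1.trans h, fun h => ht.2.trans_le (hδ i v h)⟩
  have hle : ∫ t in Set.Ioo 0 δ, (if Q (layer y t) then (1 : ℝ) else 0) ≤ layerMass Q y := by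
    refine setIntegral_mono_set ?_ ?_ ?_
    · refine Measure.integrableOn_of_bounded (M := 1) (by simp) ?_ ?_
      · exact (Measurable.ite (measurableSet_layer Q y) measurable_const
          measurable_const).aestronglyMeasurable
      · refine Filter.Eventually.of_forall fun t => ?_
        split_ifs <;> simp
    · refine Filter.Eventually.of_forall fun t => ?_
      simp only [Pi.zero_apply]
      split_ifs <;> norm_num
    · exact (Set.Ioo_subset_Ioo_right hδ1).eventuallyLE
  rw [setIntegral_congr_fun (g := fun _ => (1 : ℝ)) measurableSet_Ioo
    fun t ht => if_pos (by rw [hlay t ht]; exact hQ), h] at hle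
  simp only [integral_const, smul_eq_mul, mul_one, MeasurableSet.univ, measureReal_restrict_apply,
    Set.univ_inter, Real.volume_real_Ioo_of_le hδ0.le] at hle
  linarith

end Layers

/-! ### Retraction of the nonnegative weights to the simplex -/

section Normalize

variable {m : ℕ}

/-- The negative part of `y` is discarded, and mass is added at the vertex `v₀` until the total
mass is at least `a`. -/
noncomputable def padded (a : ℝ) (v₀ : Fin m) (y : Fin m → ℝ) : Fin m → ℝ :=
  fun v => max (y v) 0 + if v = v₀ then max 0 (a - ∑ v, max (y v) 0) else 0

lemma padded_nonneg (a : ℝ) (v₀ : Fin m) (y : Fin m → ℝ) (v : Fin m) : 0 ≤ padded a v₀ y v := by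
  simp only [padded]
  split_ifs <;> positivity

lemma le_sum_padded (a : ℝ) (v₀ : Fin m) (y : Fin m → ℝ) : a ≤ ∑ v, padded a v₀ y v := by
  simp only [padded, Finset.sum_add_distrib, Finset.sum_ite_eq', Finset.mem_univ, if_true]
  linarith [le_max_right 0 (a - ∑ v, max (y v) 0)]

/-- The rescaling of the padded weights to total mass one. -/
noncomputable def normalize (a : ℝ) (ha : 0 < a) (v₀ : Fin m) (y : Fin m → ℝ) :
    stdSimplex ℝ (Fin m) :=
  ⟨fun v => padded a v₀ y v / ∑ v, padded a v₀ y v, fun v =>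
    div_nonneg (padded_nonneg a v₀ y v) (ha.le.trans (le_sum_padded a v₀ y)), by
    rw [← Finset.sum_div, div_self]
    exact (ha.trans_le (le_sum_padded a v₀ y)).ne'⟩

lemma continuous_normalize (a : ℝ) (ha : 0 < a) (v₀ : Fin m) :
    Continuous (normalize a ha v₀) := by
  have h : ∀ v, Continuous fun y => padded a v₀ y v := by
    intro v
    simp only [padded]
    split_ifs <;> fun_prop
  refine Continuous.subtype_mk (continuous_pi fun v => ?_) _
  refine (h v).div (continuous_finsetSum _ fun v _ => h v) fun y => ?_
  exact (ha.trans_le (le_sum_padded a v₀ y)).ne'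

lemma normalize_apply_eq_zero {a : ℝ} (ha : 0 < a) (v₀ : Fin m) {y : Fin m → ℝ} (hy : ∀ v, 0 ≤ y v)
    (hsum : ∑ v, y v = a) {v : Fin m} (hv : y v = 0) : (normalize a ha v₀ y).1 v = 0 := by
  have h : ∑ v, max (y v) 0 = a := by simpa [hy] using hsum
  simp [normalize, padded, h, hv]

end Normalize
end RainbowTverberg

namespace RainbowTverberg

/-! ### The configuration complex -/

section Complex

/-- Vertices of the configuration complex: the points `v : Fin m` and the auxiliary points
`e : X`, each in one copy for every `i : G`. -/
@[ext] structure Vtx (G : Type*) (m : ℕ) (X : Type*) where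
  /-- The index of the copy. -/
  idx : G
  /-- The point of which the vertex is a copy. -/
  pt : Fin m ⊕ X

variable {G : Type*} {m k : ℕ} {X : Type*}

/-- A vertex is a pair of an index and a point. -/
def vtxEquiv : G × (Fin m ⊕ X) ≃ Vtx G m X where
  toFun a := ⟨a.1, a.2⟩
  invFun a := (a.idx, a.pt)

instance [Fintype G] [Fintype X] : Fintype (Vtx G m X) := Fintype.ofEquiv _ vtxEquiv

instance [DecidableEq G] [DecidableEq X] : DecidableEq (Vtx G m X) :=
  vtxEquiv.symm.decidableEq

instance [AddGroup G] : AddAction G (Vtx G m X) where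
  vadd g a := ⟨g + a.idx, a.pt⟩
  zero_vadd _ := Vtx.ext (zero_add _) rfl
  add_vadd _ _ _ := Vtx.ext (add_assoc _ _ _) rfl

lemma vadd_vtx [AddGroup G] (g i : G) (y : Fin m ⊕ X) :
    g +ᵥ (⟨i, y⟩ : Vtx G m X) = ⟨g + i, y⟩ := rfl

/-- The row of a copy of a point is its index together with its color; all copies of an auxiliary
point lie in one row. -/
def vrow (c : Fin m → Fin (k + 1)) : Vtx G m X → (G × Fin (k + 1)) ⊕ X
  | ⟨i, .inl v⟩ => .inl (i, c v)
  | ⟨_, .inr e⟩ => .inr e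

/-- All copies of a point lie in one column; the copies of an auxiliary point lie in different
columns. -/
def vcol : Vtx G m X → Fin m ⊕ (G × X)
  | ⟨_, .inl v⟩ => .inl v
  | ⟨i, .inr e⟩ => .inr (i, e)

/-- The class of a row is its color or its auxiliary point. -/
def vcls : (G × Fin (k + 1)) ⊕ X → Fin (k + 1) ⊕ X
  | .inl (_, j) => .inl j
  | .inr e => .inr e

/-- Two vertices span an edge if they lie in different rows and in different columns. -/
def VRel (c : Fin m → Fin (k + 1)) (a b : Vtx G m X) : Prop :=
  a = b ∨ (vrow c a ≠ vrow c b ∧ vcol a ≠ vcol b)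

instance [AddCommGroup G] (c : Fin m → Fin (k + 1)) :
    Fact (EqRel G (VRel (G := G) (X := X) c)) where
  out :=
    { refl := fun a => Or.inl rfl
      inv := by
        rintro g ⟨i, v | e⟩ ⟨i', v' | e'⟩ h
        all_goals
          rcases h with h | h
          · exact Or.inl (by rw [h])
          · refine Or.inr ?_
            simpa [vadd_vtx, vrow, vcol] using h
      free := by
        intro g a h
        obtain ⟨i, v | e⟩ := a
        all_goals simpa [VRel, vadd_vtx, vrow, vcol, eq_comm] using h }

/-- With `2 |G| - 1` vertices of each color, the configuration complex is acyclic below its top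
dimension. -/
lemma acyc_vtx (F : Type*) [Field F] [Fintype G] [DecidableEq G] [Fintype X] [DecidableEq X]
    (c : Fin m → Fin (k + 1)) (hG : 1 ≤ Fintype.card G)
    (hc : ∀ j, (Finset.univ.filter fun v => c v = j).card = 2 * Fintype.card G - 1) :
    ∀ q < Fintype.card G * (k + 1) + Fintype.card X,
      Acyc F (VRel (G := G) (X := X) c) Set.univ q := by
  have := acyc_matching (F := F) (V := Vtx G m X) (vrow c) vcol vcls (R := VRel c)
    (fun u v => Iff.rfl) ?_ ?_ (Fintype.card G * (k + 1) + Fintype.card X) Finset.univ Finset.univ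
    (by simp) (fun _ _ => Finset.mem_univ _) ?_
  · simpa using this
  · rintro ⟨i, v | e⟩ ⟨i', v' | e'⟩ h <;> simp [vrow, vcol, vcls] at h ⊢
    · rw [h]
    · exact h.2
  · rintro ⟨i, v | e⟩ ⟨i', v' | e'⟩ h h' <;> simp [vrow, vcol] at h h' ⊢
    · exact ⟨h.1, h'⟩
    · exact ⟨h'.1, h⟩
  · rintro (⟨i, j⟩ | e) -
    · have h1 : ((Finset.univ : Finset ((G × Fin (k + 1)) ⊕ X)).filter
          fun ρ' => vcls ρ' = vcls (.inl (i, j))).card ≤ Fintype.card G := by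
        refine le_trans (Finset.card_le_card (t := Finset.univ.image fun i' : G => .inl (i', j))
          ?_) Finset.card_image_le
        intro ρ' h
        rw [Finset.mem_filter] at h
        rcases ρ' with ⟨i', j'⟩ | e <;> simp [vcls] at h ⊢
        exact h.symm
      have h2 : 2 * Fintype.card G - 1 ≤
          ((Finset.univ : Finset (Vtx G m X)).filter fun u => vrow c u = .inl (i, j)).card := by
        rw [← hc j]
        refine Finset.card_le_card_of_injOn (fun v => (⟨i, .inl v⟩ : Vtx G m X)) ?_ ?_
        · intro v hv
          rw [Finset.mem_coe, Finset.mem_filter] at hv ⊢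
          simpa [vrow] using hv
        · intro v _ v' _ h
          simpa [Vtx.mk.injEq] using h
      omega
    · have h1 : ((Finset.univ : Finset ((G × Fin (k + 1)) ⊕ X)).filter
          fun ρ' => vcls ρ' = vcls (G := G) (.inr e)).card ≤ 1 := by
        rw [Finset.card_le_one]
        intro ρ h ρ' h'
        rw [Finset.mem_filter] at h h'
        rcases ρ with ⟨i', j'⟩ | e' <;> rcases ρ' with ⟨i'', j''⟩ | e'' <;> simp [vcls] at h h' ⊢
        rw [h, h']
      have h2 : 1 ≤
          ((Finset.univ : Finset (Vtx G m X)).filter fun u => vrow c u = .inr e).card := by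
        obtain ⟨i⟩ := Fintype.card_pos_iff.1 hG
        exact Finset.card_pos.2 ⟨⟨i, .inr e⟩, Finset.mem_filter.2 ⟨Finset.mem_univ _, rfl⟩⟩
      omega

/-- The weights of the points in each of the `|G|` blocks. -/
def blocks {c : Fin m → Fin (k + 1)} [Fintype G] [Fintype X]
    (x : Geo (VRel (G := G) (X := X) c)) : G → Fin m → ℝ :=
  fun i v => x.1 (⟨i, .inl v⟩)

variable {c : Fin m → Fin (k + 1)} [Fintype G] [Fintype X]

lemma continuous_coord (a : Vtx G m X) : Continuous fun x : Geo (VRel c) => x.1 a :=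
  (continuous_apply a).comp geo_val_isometry.continuous

lemma continuous_blocks : Continuous (blocks : Geo (VRel (G := G) (X := X) c) → _) :=
  continuous_pi fun _ => continuous_pi fun _ => continuous_coord _

lemma rainbowConfig_layer (x : Geo (VRel (G := G) (X := X) c)) {t : ℝ} (ht : 0 ≤ t) :
    RainbowConfig c (layer (blocks x) t) := by
  constructor
  · intro i i' hii
    rw [Finset.disjoint_left]
    intro v h h'
    rw [mem_layer] at h h'
    rcases x.clique _ _ (ht.trans_lt h).ne' (ht.trans_lt h').ne' with h | h
    · exact hii (congrArg Vtx.idx h)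
    · exact h.2 rfl
  · intro i v h v' h' hvv
    rw [Finset.mem_coe, mem_layer] at h h'
    rcases x.clique _ _ (ht.trans_lt h).ne' (ht.trans_lt h').ne' with h | h
    · simpa [Vtx.mk.injEq] using h
    · exact absurd (by simp [vrow, hvv]) h.1

lemma aux_unique (x : Geo (VRel (G := G) (X := X) c)) {e : X} {i i' : G}
    (h : x.1 ⟨i, .inr e⟩ ≠ 0) (h' : x.1 ⟨i', .inr e⟩ ≠ 0) : i = i' := by
  rcases x.clique _ _ h h' with h | h
  · exact congrArg Vtx.idx h
  · exact absurd rfl h.1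

/-- If fewer than `|G|` indices can carry mass, the mass is constant only if it vanishes. -/
lemma mass_eq_zero (x : Geo (VRel (G := G) (X := X) c)) {Y : Type*} [Fintype Y] (ι : Y → X)
    (w : G → ℝ) (hw0 : ∀ i, 0 ≤ w i) (W : Finset G) (hW : ∀ i, w i ≠ 0 → i ∈ W)
    (hcard : W.card + Fintype.card Y < Fintype.card G)
    (hconst : ∀ i i', w i + ∑ e, x.1 ⟨i, .inr (ι e)⟩ = w i' + ∑ e, x.1 ⟨i', .inr (ι e)⟩) :
    ∀ i, w i = 0 ∧ ∀ e, x.1 ⟨i, .inr (ι e)⟩ = 0 := by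
  classical
  have hloc : ∀ e, ∃ i₀ : Option G, ∀ i, x.1 ⟨i, .inr (ι e)⟩ ≠ 0 → some i = i₀ := by
    intro e
    by_cases h : ∃ i, x.1 ⟨i, .inr (ι e)⟩ ≠ 0
    · obtain ⟨i, hi⟩ := h
      exact ⟨some i, fun i' hi' => by rw [aux_unique x hi' hi]⟩
    · push Not at h
      exact ⟨none, fun i hi => absurd (h i) hi⟩
  choose i₀ hi₀ using hloc
  set S : Finset (Option G) := W.image some ∪ Finset.univ.image i₀ with hS
  have hSc : S.card < Fintype.card G := by
    refine (Finset.card_union_le _ _).trans_lt (lt_of_le_of_lt (add_le_add Finset.card_image_le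
      Finset.card_image_le) hcard)
  obtain ⟨i, hi⟩ : ∃ i : G, some i ∉ S := by
    by_contra! h
    have : (Finset.univ.image (some : G → Option G)).card ≤ S.card :=
      Finset.card_le_card fun a ha => by
        obtain ⟨i, -, rfl⟩ := Finset.mem_image.1 ha
        exact h i
    rw [Finset.card_image_of_injective _ (Option.some_injective G), Finset.card_univ] at this
    omega
  have hi1 : w i = 0 := by
    by_contra h
    exact hi (Finset.mem_union_left _ (Finset.mem_image_of_mem _ (hW i h)))
  have hi2 : ∀ e, x.1 ⟨i, .inr (ι e)⟩ = 0 := by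
    intro e
    by_contra h
    refine hi (Finset.mem_union_right _ ?_)
    rw [hi₀ e i h]
    exact Finset.mem_image_of_mem _ (Finset.mem_univ _)
  intro i'
  have h := hconst i' i
  rw [hi1, Finset.sum_eq_zero fun e _ => hi2 e, add_zero] at h
  have h1 := hw0 i'
  have h2 : ∀ e, 0 ≤ x.1 ⟨i', .inr (ι e)⟩ := fun e => x.nonneg _
  have h3 : 0 ≤ ∑ e, x.1 ⟨i', .inr (ι e)⟩ := Finset.sum_nonneg fun e _ => h2 e
  refine ⟨by linarith, fun e => ?_⟩
  exact (Finset.sum_eq_zero_iff_of_nonneg fun e _ => h2 e).1 (by linarith) e (Finset.mem_univ _)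

lemma blocks_vadd {G : Type*} [AddCommGroup G] [Fintype G] (g : G)
    (x : Geo (VRel (G := G) (X := X) c)) :
    blocks (g +ᵥ x) = blocks x ∘ Equiv.subRight g := by
  funext i v
  simp only [blocks, geo_vadd, vadd_vtx, Function.comp_apply, Equiv.subRight_apply,
    neg_add_eq_sub]

end Complex
end RainbowTverberg

namespace RainbowTverberg

/-! ### The test map -/

section Final

/-- A configuration of `r = |F|` rainbow blocks with a common image point, which can be assigned
to the complexes. -/
theorem exists_configuration (p : ℕ) [hp : Fact p.Prime] {F : Type*} [Field F] [Fintype F]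
    [CharP F p] [Algebra (ZMod p) F] {r d k s m : ℕ} (hF : Fintype.card F = r)
    (hs : 0 < s) (hsr : s ≤ r)
    (hnum : r * (k + 1) + ((s - 1) + d * (r - 1)) = 2 * ((d + 1) * (r - 1)) + 1)
    (v₀ : Fin m) (c : Fin m → Fin (k + 1))
    (hc : ∀ j, (Finset.univ.filter fun v => c v = j).card = 2 * r - 1)
    {K : Fin r → Set (Finset (Fin m))}
    (hbal : ∀ j (A : Finset (Fin m)), Set.InjOn c A → A.card ≤ k → A ∈ K j)
    (hunav : ∀ A : Fin r → Finset (Fin m), (∀ i j, i ≠ j → Disjoint (A i) (A j)) →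
      (∀ i, Set.InjOn c (A i)) → ∃ I : Finset (Fin r), I.card = s ∧ ∀ i ∈ I, A i ∈ K i)
    (f : stdSimplex ℝ (Fin m) → EuclideanSpace ℝ (Fin d)) (hf : Continuous f) :
    ∃ (σ : F → Finset (Fin m)) (y : F → stdSimplex ℝ (Fin m)) (π : F ≃ Fin r),
      (∀ i i', i ≠ i' → Disjoint (σ i) (σ i')) ∧ (∀ i, σ i ∈ K (π i)) ∧
      (∀ i v, (y i).1 v ≠ 0 → v ∈ σ i) ∧ ∀ i i', f (y i) = f (y i') := by
  classical
  have hr1 : 1 < r := hF ▸ Fintype.one_lt_card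
  have hr0 : (0 : ℝ) < 1 / r := by positivity
  -- `s - 1` auxiliary points for the obstruction, `r - 1` for each of the `d` padding components
  let X := Fin (s - 1) ⊕ (Fin d × Fin (r - 1))
  let Φ : Option (Fin d) × Bool → Geo (VRel (G := F) (X := X) c) → F → ℝ := fun j x i =>
    match j with
    | (some j, false) => f (normalize (1 / r) hr0 v₀ (blocks x i)) j
    | (none, false) => ∑ v, blocks x i v
    | (some j, true) => ∑ e : Fin (r - 1), x.1 ⟨i, .inr (.inr (j, e))⟩
    | (none, true) => layerMass (fun σ => Obstructed k K σ i) (blocks x) +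
        ∑ e : Fin (s - 1), x.1 ⟨i, .inr (.inl e)⟩
  have hΦc : ∀ j i, Continuous fun x => Φ j x i := by
    have hb : ∀ i, Continuous fun x : Geo (VRel (G := F) (X := X) c) => blocks x i :=
      fun i => (continuous_apply i).comp continuous_blocks
    rintro ⟨_ | j, _ | _⟩ i
    · exact continuous_finsetSum _ fun v _ => continuous_coord _
    · exact ((continuous_layerMass _).comp continuous_blocks).add
        (continuous_finsetSum _ fun e _ => continuous_coord _)
    · have h1 : Continuous fun x : Geo (VRel (G := F) (X := X) c) =>
          f (normalize (1 / r) hr0 v₀ (blocks x i)) :=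
        hf.comp ((continuous_normalize _ _ _).comp (hb i))
      exact (PiLp.continuous_apply 2 (fun _ : Fin d => ℝ) j).comp h1
    · exact continuous_finsetSum _ fun e _ => continuous_coord _
  have hΦG : ∀ j (g : F) x i, Φ j (g +ᵥ x) i = Φ j x (i - g) := by
    rintro ⟨_ | j, _ | _⟩ g x i
    · simp only [Φ, blocks_vadd]; rfl
    · simp only [Φ, blocks_vadd, geo_vadd, vadd_vtx, neg_add_eq_sub]
      congr 1
      simp only [layerMass]
      refine congrArg _ (funext fun t => ?_)
      refine if_congr ?_ rfl rfl
      exact obstructed_comp_iff (σ := layer (blocks x) t) (Equiv.subRight g)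
    · simp only [Φ, blocks_vadd]; rfl
    · simp only [Φ, geo_vadd, vadd_vtx, neg_add_eq_sub]
  have hne : Nonempty (Vtx F m X) := ⟨⟨0, .inl v₀⟩⟩
  have hac : ∀ q ≤ 2 * (Fintype.card (Option (Fin d)) * (Fintype.card F - 1)),
      Acyc F (VRel (G := F) (X := X) c) Set.univ q := by
    intro q hq
    refine acyc_vtx F c (by omega) (by rw [hF]; exact hc) q ?_
    simp only [X, Fintype.card_sum, Fintype.card_prod, Fintype.card_fin, Fintype.card_option, hF]
      at hq ⊢
    omega
  obtain ⟨x, hx⟩ := exists_const_point p hac Φ hΦc hΦG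
  -- the auxiliary coordinates vanish, and no superlevel configuration is obstructed
  have hpad : ∀ (j : Fin d) i (e : Fin (r - 1)), x.1 ⟨i, .inr (.inr (j, e))⟩ = 0 := by
    intro j i e
    have h := hx (some j, true)
    simp only [Φ] at h
    exact (mass_eq_zero x (fun e : Fin (r - 1) => (Sum.inr (j, e) : X)) 0 (fun _ => le_rfl) ∅
      (by simp) (by simp; omega) (by simpa using h) i).2 e
  have hconfig : ∀ t : Set.Ioo (0 : ℝ) 1, RainbowConfig c (layer (blocks x) t) :=
    fun t => rainbowConfig_layer x t.2.1.le
  let W : Finset F := Finset.univ.filter fun i => ∃ t : Set.Ioo (0 : ℝ) 1,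
    Obstructed k K (layer (blocks x) t) i
  have hW : W.card ≤ r - s := by
    have : Nonempty (Set.Ioo (0 : ℝ) 1) := ⟨⟨1 / 2, by norm_num, by norm_num⟩⟩
    refine card_obstructed_le hF hsr hunav (fun t : Set.Ioo (0 : ℝ) 1 => layer (blocks x) t)
      hconfig ?_ W fun i hi => (Finset.mem_filter.1 hi).2
    intro t t'
    rcases le_total t t' with h | h
    · exact Or.inr fun i v hv => mem_layer.2 ((Subtype.coe_le_coe.2 h).trans_lt (mem_layer.1 hv))
    · exact Or.inl fun i v hv => mem_layer.2 ((Subtype.coe_le_coe.2 h).trans_lt (mem_layer.1 hv))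
  have hB := mass_eq_zero x (fun e : Fin (s - 1) => (Sum.inl e : X))
    (fun i => layerMass (fun σ => Obstructed k K σ i) (blocks x)) (fun i => layerMass_nonneg _ _) W
    (fun i hi => by
      obtain ⟨t, ht, h⟩ := exists_of_layerMass_ne hi
      exact Finset.mem_filter.2 ⟨Finset.mem_univ _, ⟨t, ht⟩, h⟩)
    (by rw [Fintype.card_fin, hF]; omega) (hx (none, true))
  have hmass : ∀ i, ∑ v, blocks x i v = 1 / r := by
    have h := hx (none, false)
    simp only [Φ] at h
    have htot : ∑ i, ∑ v, blocks x i v = 1 := by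
      rw [← x.sum_eq, ← vtxEquiv.sum_comp, Fintype.sum_prod_type]
      refine Finset.sum_congr rfl fun i _ => ?_
      rw [Fintype.sum_sum_type]
      have : ∑ e : X, x.1 (vtxEquiv (i, .inr e)) = 0 := by
        refine Finset.sum_eq_zero fun e _ => ?_
        rcases e with e | ⟨j, e⟩
        · exact (hB i).2 e
        · exact hpad j i e
      rw [this, add_zero]
      rfl
    intro i
    rw [Finset.sum_congr rfl fun i' _ => h i' i, Finset.sum_const, Finset.card_univ, hF,
      nsmul_eq_mul] at htot
    rw [eq_div_iff (by positivity), mul_comm]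
    exact htot
  have hconf0 := rainbowConfig_layer x (le_refl 0)
  obtain ⟨π, hπ⟩ := exists_assignment hF hbal hconf0 fun i => not_of_layerMass_eq (hB i).1
  refine ⟨layer (blocks x) 0, fun i => normalize (1 / r) hr0 v₀ (blocks x i), π, hconf0.1, hπ,
    fun i v hv => ?_, fun i i' => ?_⟩
  · rw [mem_layer]
    refine lt_of_le_of_ne (x.nonneg _) fun h => hv ?_
    exact normalize_apply_eq_zero hr0 v₀ (fun v => x.nonneg _) (hmass i) h.symm
  · ext j
    exact hx (some j, false) i i'

end Final
end RainbowTverberg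

/-- **Colored Tverberg theorem for rainbow-unavoidable complexes.** -/
theorem colored_tverberg_rainbow_unavoidable
    (p ν r d k s m : ℕ) (hp : p.Prime) (hν : 0 < ν) (hr : r = p ^ ν)
    (hd : 1 ≤ d) (hs : 0 < s) (hsr : s ≤ r)
    (hnum : (r : ℤ) * ((k : ℤ) - 1) + s = ((r : ℤ) - 1) * d)
    (hm : m = (2 * r - 1) * (k + 1))
    (c : Fin m → Fin (k + 1))
    (hc : ∀ j : Fin (k + 1), (Finset.univ.filter fun v => c v = j).card = 2 * r - 1)
    (K : Fin r → Set (Finset (Fin m)))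
    (hcomplex : ∀ i, IsSimplicialComplex (K i))
    (hbal : ∀ i, IsRainbowBalanced c (K i))
    (hunav : CollectivelyRainbowUnavoidable c r s K)
    (f : stdSimplex ℝ (Fin m) → EuclideanSpace ℝ (Fin d)) (hf : Continuous f) :
    ∃ Δ : Fin r → Finset (Fin m),
      (∀ i j, i ≠ j → Disjoint (Δ i) (Δ j)) ∧
      (∀ i, Δ i ∈ K i) ∧
      (⋂ i, f '' simplexFace (Δ i)).Nonempty := by
  subst hr
  have hpf : Fact p.Prime := ⟨hp⟩
  have : Fintype (GaloisField p ν) := Fintype.ofFinite _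
  have hcard : Fintype.card (GaloisField p ν) = p ^ ν := by
    rw [← Nat.card_eq_fintype_card, GaloisField.card p ν hν.ne']
  obtain ⟨r', hr'⟩ : ∃ r', p ^ ν = r' + 1 := Nat.exists_eq_add_one.2 (Nat.pow_pos hp.pos)
  obtain ⟨s', hs'⟩ : ∃ s', s = s' + 1 := Nat.exists_eq_add_one.2 hs
  have hnum' : p ^ ν * (k + 1) + ((s - 1) + d * (p ^ ν - 1)) =
      2 * ((d + 1) * (p ^ ν - 1)) + 1 := by
    rw [hr', hs'] at hnum ⊢
    simp only [Nat.add_sub_cancel]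
    push_cast at hnum
    zify
    linear_combination hnum
  have hpos : 0 < (Finset.univ.filter fun v => c v = 0).card := by
    rw [hc]; omega
  obtain ⟨v₀, -⟩ := Finset.card_pos.1 hpos
  obtain ⟨σ, y, π, h1, h2, h3, h4⟩ := RainbowTverberg.exists_configuration p hcard hs hsr hnum' v₀
    c hc (fun j => (hbal j).1) hunav f hf
  refine ⟨fun j => σ (π.symm j), fun i j hij => h1 _ _ fun h => hij (π.symm.injective h),
    fun j => ?_, f (y 0), Set.mem_iInter.2 fun j => ⟨y (π.symm j), ?_, h4 _ _⟩⟩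
  · have := h2 (π.symm j)
    rwa [Equiv.apply_symm_apply] at this
  · intro v hv
    exact h3 _ v hv
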